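/- Every proper weak-star closed subspace of H^∞ (with the weak-star topology inherited from L^∞(𝕋,m)) that is invariant under the backward shift f ↦ (f−f(0))/z is of the form K^∞_ϑ for some inner function ϑ. -/

import Mathlib

open MeasureTheory Complex Filter Set Metric Polynomial

noncomputable section

/-- Normalized arc-length measure on the unit circle 𝕋, realized on the
parameter interval `(0, 2π]` via `θ ↦ e^{iθ}`. -/
def arcM : Measure ℝ :=
  (ENNReal.ofReal (2 * Real.pi))⁻¹ • (volume.restrict (Set.Ioc 0 (2 * Real.pi)))

/-- The open unit disc 𝔻 ⊆ ℂ. -/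
def uDisc : Set ℂ := Metric.ball 0 1

/-- The unit circle 𝕋 ⊆ ℂ. -/
def uCircle : Set ℂ := Metric.sphere 0 1

/-- The boundary point `e^{iθ}`. -/
def bpt (θ : ℝ) : ℂ := Complex.exp (θ * Complex.I)

/-- `f` is analytic on the open unit disc. -/
def AnalyticOnDisc (f : ℂ → ℂ) : Prop := DifferentiableOn ℂ f uDisc

/-- The integral mean `∫_𝕋 |f(rζ)|^p dm(ζ)`. -/
def hMean (p : ℝ) (f : ℂ → ℂ) (r : ℝ) : ℝ := ∫ θ, ‖f ((r : ℂ) * bpt θ)‖ ^ p ∂arcM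

/-- Membership in the Hardy space `H^p`, `0 < p < ∞`. -/
def MemHp (p : ℝ) (f : ℂ → ℂ) : Prop :=
  AnalyticOnDisc f ∧ BddAbove (hMean p f '' Set.Ioo 0 1)

/-- The Hardy space (quasi-)norm `‖f‖_{H^p} = (sup_{0<r<1} ∫_𝕋 |f(rζ)|^p dm)^{min(1,1/p)}`. -/
def hardyNorm (p : ℝ) (f : ℂ → ℂ) : ℝ :=
  sSup (hMean p f '' Set.Ioo 0 1) ^ min 1 (1 / p)

/-- Membership in `H^∞`: bounded analytic functions on 𝔻. -/
def MemHinf (f : ℂ → ℂ) : Prop :=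
  AnalyticOnDisc f ∧ ∃ C : ℝ, ∀ z ∈ uDisc, ‖f z‖ ≤ C

/-- `F` is (a representative of) the boundary function of `f` : radial limits a.e. on 𝕋. -/
def BoundaryFn (f : ℂ → ℂ) (F : ℝ → ℂ) : Prop :=
  ∀ᵐ θ ∂arcM, Filter.Tendsto (fun r : ℝ => f ((r : ℂ) * bpt θ))
    (nhdsWithin 1 (Set.Iio 1)) (nhds (F θ))

/-- `ϑ` is an inner function: bounded analytic with unimodular boundary values a.e. -/
def IsInner (ϑ : ℂ → ℂ) : Prop :=
  MemHinf ϑ ∧ ∃ Θ : ℝ → ℂ, BoundaryFn ϑ Θ ∧ ∀ᵐ θ ∂arcM, ‖Θ θ‖ = 1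

/-- The boundary function of `f` lies in `ϑ ⋅ conj(H^p_0)`. -/
def PseudoCont (p : ℝ) (ϑ f : ℂ → ℂ) : Prop :=
  ∃ F Θ G : ℝ → ℂ, ∃ g : ℂ → ℂ,
    BoundaryFn f F ∧ BoundaryFn ϑ Θ ∧ MemHp p g ∧ g 0 = 0 ∧ BoundaryFn g G ∧
    ∀ᵐ θ ∂arcM, F θ = Θ θ * (starRingEnd ℂ) (G θ)

/-- The boundary function of `f` lies in `ϑ ⋅ conj(H^∞_0)`. -/
def PseudoContInf (ϑ f : ℂ → ℂ) : Prop :=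
  ∃ F Θ G : ℝ → ℂ, ∃ g : ℂ → ℂ,
    BoundaryFn f F ∧ BoundaryFn ϑ Θ ∧ MemHinf g ∧ g 0 = 0 ∧ BoundaryFn g G ∧
    ∀ᵐ θ ∂arcM, F θ = Θ θ * (starRingEnd ℂ) (G θ)

/-- `f` extends analytically across the boundary set `S ⊆ 𝕋`. -/
def ExtendsAcross (f : ℂ → ℂ) (S : Set ℂ) : Prop :=
  ∃ U : Set ℂ, ∃ g : ℂ → ℂ, IsOpen U ∧ S ⊆ U ∧
    DifferentiableOn ℂ g (uDisc ∪ U) ∧ Set.EqOn g f uDisc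

/-- The boundary spectrum `σ(ϑ)`: the points of 𝕋 across which `ϑ` admits no
analytic continuation. -/
def bSpectrum (ϑ : ℂ → ℂ) : Set ℂ := {ζ | ζ ∈ uCircle ∧ ¬ ExtendsAcross ϑ {ζ}}

/-- Membership in the space `K^p_ϑ` of pseudocontinuable functions, `0 < p < ∞`:
`f ∈ H^p`, the boundary function of `f` lies in `ϑ ⋅ conj(H^p_0)`, and `f`
continues analytically across `𝕋 ∖ σ(ϑ)`. -/
def MemKp (p : ℝ) (ϑ f : ℂ → ℂ) : Prop :=
  MemHp p f ∧ PseudoCont p ϑ f ∧ ExtendsAcross f (uCircle \ bSpectrum ϑ)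

/-- Membership in `K^∞_ϑ = H^∞ ∩ ϑ ⋅ conj(H^∞_0)`. -/
def MemKinf (ϑ f : ℂ → ℂ) : Prop := MemHinf f ∧ PseudoContInf ϑ f

/-- The backward shift `f ↦ (f - f(0))/z`. -/
def bShift (f : ℂ → ℂ) : ℂ → ℂ :=
  fun z => if z = 0 then deriv f 0 else (f z - f 0) / z

/-- `X ∩ K^p_ϑ` is dense in `K^p_ϑ` in the `H^p` metric. -/
def DenseInKp (p : ℝ) (ϑ : ℂ → ℂ) (X : Set (ℂ → ℂ)) : Prop :=
  ∀ f : ℂ → ℂ, MemKp p ϑ f → ∀ ε > (0 : ℝ), ∃ g ∈ X, MemKp p ϑ g ∧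
    hardyNorm p (fun z => f z - g z) < ε

/-- `X ∩ K^∞_ϑ` is dense in `K^∞_ϑ` in the weak-star topology inherited from
`L^∞(𝕋, m) = (L¹(𝕋, m))^*`. -/
def WStarDenseKinf (ϑ : ℂ → ℂ) (X : Set (ℂ → ℂ)) : Prop :=
  ∀ f : ℂ → ℂ, MemKinf ϑ f → ∀ F : ℝ → ℂ, BoundaryFn f F →
    ∀ (n : ℕ) (h : Fin n → ℝ → ℂ), (∀ i, Integrable (h i) arcM) → ∀ ε > (0 : ℝ),
      ∃ g ∈ X, MemKinf ϑ g ∧ ∃ G : ℝ → ℂ, BoundaryFn g G ∧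
        ∀ i, ‖∫ θ, (F θ - G θ) * h i θ ∂arcM‖ < ε

/-- The weak-star closure of a set `S ⊆ H^∞`, with the weak-star topology inherited from
`L^∞(𝕋,m) = (L¹(𝕋,m))^*`, described via boundary functions: `f` is in the closure iff every
basic weak-star neighborhood of `f` (given by finitely many `L¹` test functions and `ε > 0`)
meets `S`. -/
def HinfWStarClosure (S : Set (ℂ → ℂ)) : Set (ℂ → ℂ) :=
  {f | MemHinf f ∧ ∀ F : ℝ → ℂ, BoundaryFn f F →
    ∀ (n : ℕ) (h : Fin n → ℝ → ℂ), (∀ i, Integrable (h i) arcM) → ∀ ε > (0 : ℝ),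
      ∃ g ∈ S, ∃ G : ℝ → ℂ, BoundaryFn g G ∧
        ∀ i, ‖∫ θ, (F θ - G θ) * h i θ ∂arcM‖ < ε}

/-! ## Basics -/

lemma norm_bpt (θ : ℝ) : ‖bpt θ‖ = 1 := by
  unfold bpt; exact Complex.norm_exp_ofReal_mul_I θ

lemma bpt_ne_zero (θ : ℝ) : bpt θ ≠ 0 := by
  unfold bpt; exact Complex.exp_ne_zero _

lemma continuous_bpt : Continuous bpt := by
  unfold bpt; fun_prop

lemma conj_bpt (θ : ℝ) : (starRingEnd ℂ) (bpt θ) = (bpt θ)⁻¹ := by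
  rw [Complex.inv_def, Complex.normSq_eq_norm_sq, norm_bpt]; simp

instance arcM_prob : IsProbabilityMeasure arcM := by
  constructor
  unfold arcM
  simp only [Measure.smul_apply, Measure.restrict_apply MeasurableSet.univ, univ_inter,
    Real.volume_Ioc, smul_eq_mul, sub_zero]
  apply ENNReal.inv_mul_cancel
  · simp [Real.pi_pos]
  · exact ENNReal.ofReal_ne_top

lemma integral_arcM {E : Type*} [NormedAddCommGroup E] [NormedSpace ℝ E] (f : ℝ → E) :
    ∫ θ, f θ ∂arcM = (2 * Real.pi)⁻¹ • ∫ θ in (0:ℝ)..(2 * Real.pi), f θ := by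
  unfold arcM
  rw [integral_smul_measure, intervalIntegral.integral_of_le (by positivity)]
  congr 1
  rw [ENNReal.toReal_inv, ENNReal.toReal_ofReal (by positivity)]

lemma integral_arcM_circle (f : ℂ → ℂ) (r : ℝ) :
    ∫ θ, f ((r : ℂ) * bpt θ) ∂arcM = Real.circleAverage f 0 r := by
  rw [integral_arcM, Real.circleAverage_def]
  simp [circleMap, bpt]

lemma mem_uDisc {z : ℂ} : z ∈ uDisc ↔ ‖z‖ < 1 := by simp [uDisc]

lemma isOpen_uDisc : IsOpen uDisc := isOpen_ball

lemma norm_rbpt {r : ℝ} (h0 : 0 ≤ r) (θ : ℝ) : ‖(r : ℂ) * bpt θ‖ = r := by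
  rw [norm_mul, norm_bpt, mul_one, Complex.norm_real, Real.norm_of_nonneg h0]

lemma rbpt_mem {r : ℝ} (h0 : 0 ≤ r) (h1 : r < 1) (θ : ℝ) : (r : ℂ) * bpt θ ∈ uDisc := by
  rw [mem_uDisc, norm_rbpt h0]; exact h1

lemma mean_value {φ : ℂ → ℂ} (hφ : DifferentiableOn ℂ φ uDisc) {r : ℝ} (h0 : 0 ≤ r)
    (h1 : r < 1) : ∫ θ, φ ((r : ℂ) * bpt θ) ∂arcM = φ 0 := by
  rw [integral_arcM_circle]
  apply DiffContOnCl.circleAverage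
  rw [abs_of_nonneg h0]
  apply DifferentiableOn.diffContOnCl
  apply hφ.mono
  exact closure_ball_subset_closedBall.trans (closedBall_subset_ball h1)

lemma integrable_cont {E : Type*} [NormedAddCommGroup E] {f : ℝ → E} (hf : Continuous f) :
    Integrable f arcM := by
  unfold arcM
  refine Integrable.smul_measure ?_ (by simp [Real.pi_pos])
  exact (hf.integrableOn_Icc (a := 0) (b := 2 * Real.pi)).mono_set Ioc_subset_Icc_self

lemma cont_circle {f : ℂ → ℂ} (hf : ContinuousOn f uDisc) {r : ℝ} (h0 : 0 ≤ r)
    (h1 : r < 1) : Continuous (fun θ : ℝ => f ((r : ℂ) * bpt θ)) := by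
  have : Continuous (fun θ : ℝ => (r : ℂ) * bpt θ) := continuous_const.mul continuous_bpt
  exact hf.comp_continuous this (fun θ => rbpt_mem h0 h1 θ)

lemma continuous_bpt_zpow (n : ℤ) : Continuous (fun θ => bpt θ ^ n) :=
  continuous_bpt.zpow₀ n (fun θ => Or.inl (bpt_ne_zero θ))

lemma norm_bpt_zpow (n : ℤ) (θ : ℝ) : ‖bpt θ ^ n‖ = 1 := by
  rw [norm_zpow, norm_bpt, one_zpow]

lemma integral_bzpow (n : ℤ) : ∫ θ, bpt θ ^ n ∂arcM = if n = 0 then 1 else 0 := by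
  by_cases hn : n = 0
  · simp [hn]
  rw [if_neg hn, integral_arcM]
  have h : ∀ θ : ℝ, bpt θ ^ n = Complex.exp ((n * Complex.I) * θ) := by
    intro θ; unfold bpt; rw [← Complex.exp_int_mul]; congr 1; ring
  simp_rw [h]
  rw [integral_exp_mul_complex (by simp [hn])]
  have : Complex.exp ((n * Complex.I) * ((2 * Real.pi : ℝ) : ℂ)) = 1 := by
    rw [Complex.exp_eq_one_iff]; exact ⟨n, by push_cast; ring⟩
  rw [this]; simp

lemma Integrable.mul_cont {u : ℝ → ℂ} (hu : Integrable u arcM) {v : ℝ → ℂ} (hv : Continuous v)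
    {K : ℝ} (hK : ∀ θ, ‖v θ‖ ≤ K) : Integrable (fun θ => u θ * v θ) arcM := by
  exact hu.mul_bdd (c := K) hv.aestronglyMeasurable (ae_of_all _ hK)

/-- Fourier coefficients. -/
def fc (u : ℝ → ℂ) (n : ℤ) : ℂ := ∫ θ, u θ * bpt θ ^ (-n) ∂arcM

lemma int_zpow {u : ℝ → ℂ} (hu : Integrable u arcM) (n : ℤ) :
    Integrable (fun θ => u θ * bpt θ ^ n) arcM :=
  Integrable.mul_cont hu (continuous_bpt_zpow n) (fun θ => (norm_bpt_zpow n θ).le)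

lemma norm_fc_le (u : ℝ → ℂ) (n : ℤ) : ‖fc u n‖ ≤ ∫ θ, ‖u θ‖ ∂arcM := by
  unfold fc
  refine (norm_integral_le_integral_norm _).trans ?_
  simp [norm_bpt]

lemma fc_zero (u : ℝ → ℂ) : fc u 0 = ∫ θ, u θ ∂arcM := by simp [fc]

lemma fc_congr {u v : ℝ → ℂ} (h : u =ᵐ[arcM] v) (n : ℤ) : fc u n = fc v n := by
  unfold fc
  apply integral_congr_ae
  filter_upwards [h] with θ hθ; rw [hθ]

lemma fc_conj (u : ℝ → ℂ) (n : ℤ) :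
    fc (fun θ => (starRingEnd ℂ) (u θ)) n = (starRingEnd ℂ) (fc u (-n)) := by
  unfold fc
  rw [← integral_conj]
  congr 1; ext θ
  rw [map_mul, map_zpow₀, conj_bpt]; simp

/-- The Cauchy kernel. -/
def cker (w : ℂ) (θ : ℝ) : ℂ := (1 - w * (bpt θ)⁻¹)⁻¹

/-- Cauchy transform -/
def Ct (u : ℝ → ℂ) (w : ℂ) : ℂ := ∫ θ, u θ * cker w θ ∂arcM

lemma norm_den {w : ℂ} (θ : ℝ) : 1 - ‖w‖ ≤ ‖1 - w * (bpt θ)⁻¹‖ := by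
  have := norm_sub_norm_le (1 : ℂ) (w * (bpt θ)⁻¹)
  simpa [norm_bpt] using this

lemma den_ne {w : ℂ} (hw : ‖w‖ < 1) (θ : ℝ) : 1 - w * (bpt θ)⁻¹ ≠ 0 := by
  have := norm_den (w := w) θ
  rw [← norm_pos_iff]; linarith

lemma continuous_cker {w : ℂ} (hw : ‖w‖ < 1) : Continuous (cker w) := by
  unfold cker
  refine Continuous.inv₀ ?_ (den_ne hw)
  exact continuous_const.sub (continuous_const.mul (continuous_bpt.inv₀ bpt_ne_zero))

lemma norm_cker_le {w : ℂ} (hw : ‖w‖ < 1) (θ : ℝ) : ‖cker w θ‖ ≤ (1 - ‖w‖)⁻¹ := by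
  unfold cker
  rw [norm_inv]
  exact inv_anti₀ (by linarith) (norm_den θ)

lemma int_cker {u : ℝ → ℂ} (hu : Integrable u arcM) {w : ℂ} (hw : ‖w‖ < 1) :
    Integrable (fun θ => u θ * cker w θ) arcM :=
  Integrable.mul_cont hu (continuous_cker hw) (norm_cker_le hw)

lemma Ct_hasSum {u : ℝ → ℂ} (hu : Integrable u arcM) {w : ℂ} (hw : ‖w‖ < 1) :
    HasSum (fun n : ℕ => fc u n * w ^ n) (Ct u w) := by
  have h1 : ∀ n : ℕ, fc u n * w ^ n = ∫ θ, u θ * bpt θ ^ (-(n:ℤ)) * w ^ n ∂arcM := by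
    intro n; unfold fc; rw [integral_mul_const]
  simp_rw [h1]
  unfold Ct
  apply MeasureTheory.hasSum_integral_of_dominated_convergence
    (bound := fun n θ => ‖u θ‖ * ‖w‖ ^ n)
  · intro n
    exact ((int_zpow hu _).mul_const _).aestronglyMeasurable
  · intro n; filter_upwards with θ
    simp [norm_bpt]
  · filter_upwards with θ
    exact (summable_geometric_of_lt_one (norm_nonneg _) hw).mul_left _
  · simp_rw [tsum_mul_left]
    exact hu.norm.mul_const _
  · filter_upwards with θ
    have : HasSum (fun n : ℕ => (w * (bpt θ)⁻¹) ^ n) (cker w θ) :=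
      hasSum_geometric_of_norm_lt_one (by simpa [norm_bpt] using hw)
    have h2 := this.mul_left (u θ)
    have h3 : (fun n : ℕ => u θ * bpt θ ^ (-(n:ℤ)) * w ^ n)
        = fun n : ℕ => u θ * (w * (bpt θ)⁻¹) ^ n := by
      ext n
      rw [mul_pow, zpow_neg, zpow_natCast, inv_pow]; ring
    rw [h3]; exact h2

lemma Ct_zero (u : ℝ → ℂ) : Ct u 0 = ∫ θ, u θ ∂arcM := by simp [Ct, cker]

lemma powser_diff {a : ℕ → ℂ} {K : ℝ} (ha : ∀ n, ‖a n‖ ≤ K) :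
    DifferentiableOn ℂ (fun w => ∑' n, a n * w ^ n) uDisc := by
  intro w hw
  rw [mem_uDisc] at hw
  obtain ⟨ρ, h1, h2⟩ := exists_between hw
  have hρ : 0 ≤ ρ := (norm_nonneg w).trans h1.le
  have : DifferentiableOn ℂ (fun w => ∑' n, a n * w ^ n) (ball 0 ρ) := by
    apply differentiableOn_tsum_of_summable_norm (u := fun n => K * ρ ^ n)
    · exact (summable_geometric_of_lt_one hρ h2).mul_left _
    · intro n; fun_prop
    · exact isOpen_ball
    · intro n z hz
      rw [norm_mul, norm_pow]
      have : ‖z‖ ≤ ρ := by simpa using (mem_ball.1 hz).le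
      gcongr
      · exact (norm_nonneg _).trans (ha 0)
      · exact ha n
  exact (this.differentiableAt (isOpen_ball.mem_nhds (by simpa using h1))).differentiableWithinAt

lemma Ct_diff {u : ℝ → ℂ} (hu : Integrable u arcM) : DifferentiableOn ℂ (Ct u) uDisc := by
  have := powser_diff (a := fun n : ℕ => fc u n) (fun n => norm_fc_le u n)
  refine this.congr ?_
  intro w hw
  exact (Ct_hasSum hu (mem_uDisc.1 hw)).tsum_eq.symm

lemma Ct_add {u v : ℝ → ℂ} (hu : Integrable u arcM) (hv : Integrable v arcM) {w : ℂ}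
    (hw : ‖w‖ < 1) : Ct (fun θ => u θ + v θ) w = Ct u w + Ct v w := by
  unfold Ct
  rw [← integral_add (int_cker hu hw) (int_cker hv hw)]
  congr 1; ext θ; ring

lemma Ct_smul (c : ℂ) (u : ℝ → ℂ) (w : ℂ) : Ct (fun θ => c * u θ) w = c * Ct u w := by
  unfold Ct
  rw [← integral_const_mul]
  congr 1; ext θ; ring

/-- Poisson kernel -/
def pk (w : ℂ) (θ : ℝ) : ℝ := (1 - ‖w‖ ^ 2) / ‖1 - w * (bpt θ)⁻¹‖ ^ 2

/-- Poisson integral -/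
def Po (u : ℝ → ℂ) (w : ℂ) : ℂ := ∫ θ, u θ * (pk w θ : ℂ) ∂arcM

lemma pk_nonneg {w : ℂ} (hw : ‖w‖ < 1) (θ : ℝ) : 0 ≤ pk w θ := by
  unfold pk
  apply div_nonneg _ (by positivity)
  nlinarith [norm_nonneg w]

lemma pk_eq {w : ℂ} (hw : ‖w‖ < 1) (θ : ℝ) :
    (pk w θ : ℂ) = cker w θ + (starRingEnd ℂ) (cker w θ) - 1 := by
  unfold pk cker
  have h1 := den_ne hw θ
  have hb := bpt_ne_zero θ
  have h2 : (starRingEnd ℂ) (1 - w * (bpt θ)⁻¹) ≠ 0 :=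
    (map_ne_zero (starRingEnd ℂ)).2 h1
  push_cast
  rw [← Complex.mul_conj' (1 - w * (bpt θ)⁻¹), ← Complex.mul_conj' w, map_inv₀]
  have h3 : (starRingEnd ℂ) (1 - w * (bpt θ)⁻¹) = 1 - (starRingEnd ℂ) w * bpt θ := by
    simp [conj_bpt]
  rw [h3] at h2 ⊢
  have h4 : w * (starRingEnd ℂ) w = (w * (bpt θ)⁻¹) * ((starRingEnd ℂ) w * bpt θ) := by
    field_simp
  rw [h4]
  generalize w * (bpt θ)⁻¹ = a at *
  generalize (starRingEnd ℂ) w * bpt θ = b at *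
  field_simp
  ring

lemma continuous_pk {w : ℂ} (hw : ‖w‖ < 1) : Continuous (pk w) := by
  unfold pk
  refine Continuous.div continuous_const ?_ ?_
  · exact ((continuous_const.sub
      (continuous_const.mul (continuous_bpt.inv₀ bpt_ne_zero))).norm).pow 2
  · intro θ
    have := den_ne hw θ
    positivity

lemma pk_symm (r : ℝ) (θ θ' : ℝ) : pk (r * bpt θ) θ' = pk (r * bpt θ') θ := by
  unfold pk
  have : ‖1 - r * bpt θ * (bpt θ')⁻¹‖ = ‖1 - r * bpt θ' * (bpt θ)⁻¹‖ := by
    rw [← Complex.norm_conj]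
    congr 1
    simp [conj_bpt]; ring
  rw [this]
  simp [norm_bpt]

lemma pk_le {w : ℂ} (hw : ‖w‖ < 1) (θ : ℝ) : pk w θ ≤ 1 / (1 - ‖w‖) ^ 2 := by
  unfold pk
  have := norm_den (w := w) θ
  have h3 : 0 < 1 - ‖w‖ := by linarith
  gcongr
  nlinarith [norm_nonneg w]

lemma int_pk {u : ℝ → ℂ} (hu : Integrable u arcM) {w : ℂ} (hw : ‖w‖ < 1) :
    Integrable (fun θ => u θ * (pk w θ : ℂ)) arcM := by
  refine Integrable.mul_cont hu (Complex.continuous_ofReal.comp (continuous_pk hw))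
    (K := 1 / (1 - ‖w‖) ^ 2) ?_
  intro θ
  rw [Complex.norm_real, Real.norm_of_nonneg (pk_nonneg hw θ)]
  exact pk_le hw θ

lemma Po_eq {u : ℝ → ℂ} (hu : Integrable u arcM) {w : ℂ} (hw : ‖w‖ < 1) :
    Po u w = Ct u w + (starRingEnd ℂ) (Ct (fun θ => (starRingEnd ℂ) (u θ)) w)
      - ∫ θ, u θ ∂arcM := by
  unfold Po Ct
  rw [← integral_conj, ← integral_add (int_cker hu hw), ← integral_sub]
  · congr 1; ext θ; rw [pk_eq hw, map_mul, Complex.conj_conj]; ring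
  · refine (int_cker hu hw).add ?_
    simp only [map_mul, Complex.conj_conj]
    refine Integrable.mul_cont hu (Complex.continuous_conj.comp (continuous_cker hw)) (K := (1 - ‖w‖)⁻¹) ?_
    intro θ; simpa using norm_cker_le hw θ
  · exact hu
  · simp only [map_mul, Complex.conj_conj]
    refine Integrable.mul_cont hu (Complex.continuous_conj.comp (continuous_cker hw)) (K := (1 - ‖w‖)⁻¹) ?_
    intro θ; simpa using norm_cker_le hw θ

lemma fc_one (n : ℤ) : fc (fun _ => 1) n = if n = 0 then 1 else 0 := by
  unfold fc; simp only [one_mul, integral_bzpow, neg_eq_zero]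

lemma fc_zpow (m n : ℤ) : fc (fun θ => bpt θ ^ m) n = if n = m then 1 else 0 := by
  unfold fc
  have : ∀ θ, bpt θ ^ m * bpt θ ^ (-n) = bpt θ ^ (m - n) := by
    intro θ; rw [← zpow_add₀ (bpt_ne_zero θ)]; rfl
  simp_rw [this, integral_bzpow]
  by_cases h : n = m
  · simp [h]
  · rw [if_neg h, if_neg]; intro h'; apply h; linarith

lemma int_zpow' (m : ℤ) : Integrable (fun θ => bpt θ ^ m) arcM :=
  integrable_cont (continuous_bpt_zpow m)

lemma Ct_zpow (m : ℤ) {w : ℂ} (hw : ‖w‖ < 1) :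
    Ct (fun θ => bpt θ ^ m) w = if 0 ≤ m then w ^ m.toNat else 0 := by
  rw [← (Ct_hasSum (int_zpow' m) hw).tsum_eq]
  simp_rw [fc_zpow]
  split_ifs with h
  · rw [tsum_eq_single m.toNat]
    · simp [h]
    · intro n hn
      rw [if_neg]; · simp
      intro h'; apply hn; omega
  · convert tsum_zero with n
    rw [if_neg]; · simp
    omega

lemma Po_zpow (m : ℤ) {w : ℂ} (hw : ‖w‖ < 1) :
    Po (fun θ => bpt θ ^ m) w =
      if 0 ≤ m then w ^ m.toNat else (starRingEnd ℂ) w ^ (-m).toNat := by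
  rw [Po_eq (int_zpow' m) hw]
  have : (fun θ => (starRingEnd ℂ) (bpt θ ^ m)) = fun θ => bpt θ ^ (-m) := by
    ext θ; rw [map_zpow₀, conj_bpt]; simp
  rw [this, Ct_zpow _ hw, Ct_zpow _ hw, integral_bzpow]
  rcases lt_trichotomy m 0 with h | h | h
  · rw [if_neg (by omega), if_pos (by omega), if_neg (by omega), if_neg (by omega)]; simp
  · simp [h]
  · rw [if_pos (by omega), if_neg (by omega), if_neg (by omega), if_pos (by omega)]; simp

lemma integral_pk {w : ℂ} (hw : ‖w‖ < 1) : ∫ θ, pk w θ ∂arcM = 1 := by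
  have h := Po_zpow 0 hw
  simp [Po] at h
  rw [integral_complex_ofReal] at h
  exact_mod_cast h

/-- L¹ contraction. -/
lemma Po_norm_le (u : ℝ → ℂ) {w : ℂ} (hw : ‖w‖ < 1) :
    ‖Po u w‖ ≤ ∫ θ, ‖u θ‖ * pk w θ ∂arcM := by
  unfold Po
  refine (norm_integral_le_integral_norm _).trans_eq ?_
  congr 1; ext θ
  rw [norm_mul, Complex.norm_real, Real.norm_of_nonneg (pk_nonneg hw θ)]

lemma Po_bdd {u : ℝ → ℂ} {K : ℝ} (hu : Integrable u arcM) (hK : ∀ᵐ θ ∂arcM, ‖u θ‖ ≤ K) {w : ℂ}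
    (hw : ‖w‖ < 1) : ‖Po u w‖ ≤ K := by
  refine (Po_norm_le u hw).trans ?_
  have : K = ∫ θ, K * pk w θ ∂arcM := by rw [integral_const_mul, integral_pk hw, mul_one]
  rw [this]
  apply integral_mono_ae
  · have := (int_pk hu hw).norm
    refine this.congr ?_
    filter_upwards with θ
    rw [norm_mul, Complex.norm_real, Real.norm_of_nonneg (pk_nonneg hw θ)]
  · exact (integrable_cont (continuous_pk hw)).const_mul _
  · filter_upwards [hK] with θ hθ
    exact mul_le_mul_of_nonneg_right hθ (pk_nonneg hw θ)

lemma Po_continuousOn {u : ℝ → ℂ} (hu : Integrable u arcM) : ContinuousOn (Po u) uDisc := by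
  have : ContinuousOn (fun w => Ct u w + (starRingEnd ℂ) (Ct (fun θ => (starRingEnd ℂ) (u θ)) w)
      - ∫ θ, u θ ∂arcM) uDisc := by
    have h1 := (Ct_diff hu).continuousOn
    have h2 := (Ct_diff (u := fun θ => (starRingEnd ℂ) (u θ))
      (by simpa using (LinearIsometryEquiv.integrable_comp_iff Complex.conjLIE).2 hu)).continuousOn
    exact (h1.add (Complex.continuous_conj.comp_continuousOn h2)).sub continuousOn_const
  exact this.congr (fun w hw => Po_eq hu (mem_uDisc.1 hw))

lemma integrable_conj {u : ℝ → ℂ} (hu : Integrable u arcM) :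
    Integrable (fun θ => (starRingEnd ℂ) (u θ)) arcM := by
  simpa using (LinearIsometryEquiv.integrable_comp_iff Complex.conjLIE).2 hu

lemma Po_add {u v : ℝ → ℂ} (hu : Integrable u arcM) (hv : Integrable v arcM) {w : ℂ}
    (hw : ‖w‖ < 1) : Po (fun θ => u θ + v θ) w = Po u w + Po v w := by
  unfold Po
  rw [← integral_add (int_pk hu hw) (int_pk hv hw)]
  congr 1; ext θ; ring

lemma Po_sub {u v : ℝ → ℂ} (hu : Integrable u arcM) (hv : Integrable v arcM) {w : ℂ}
    (hw : ‖w‖ < 1) : Po (fun θ => u θ - v θ) w = Po u w - Po v w := by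
  unfold Po
  rw [← integral_sub (int_pk hu hw) (int_pk hv hw)]
  congr 1; ext θ; ring

lemma Po_L1 {u : ℝ → ℂ} (hu : Integrable u arcM) {r : ℝ} (h0 : 0 ≤ r) (h1 : r < 1) :
    ∫ θ, ‖Po u (r * bpt θ)‖ ∂arcM ≤ ∫ θ, ‖u θ‖ ∂arcM := by
  have hr : ∀ θ, ‖(r : ℂ) * bpt θ‖ < 1 := fun θ => by rw [norm_rbpt h0]; exact h1
  have hcont : Continuous (fun p : ℝ × ℝ => pk (r * bpt p.1) p.2) := by
    unfold pk
    have hb1 : Continuous (fun p : ℝ × ℝ => bpt p.1) := continuous_bpt.comp continuous_fst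
    have hb2 : Continuous (fun p : ℝ × ℝ => bpt p.2) := continuous_bpt.comp continuous_snd
    refine Continuous.div ?_ ?_ ?_
    · exact continuous_const.sub ((continuous_const.mul hb1).norm.pow 2)
    · exact ((continuous_const.sub ((continuous_const.mul hb1).mul
        (hb2.inv₀ (fun p => bpt_ne_zero _)))).norm).pow 2
    · intro p
      have := den_ne (hr p.1) p.2
      positivity
  have hI : Integrable (fun p : ℝ × ℝ => ‖u p.2‖ * pk (r * bpt p.1) p.2) (arcM.prod arcM) := by
    have hA : Integrable (fun p : ℝ × ℝ => ‖u p.2‖) (arcM.prod arcM) := hu.norm.comp_snd arcM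
    refine hA.mul_bdd (c := 1 / (1 - r) ^ 2) hcont.aestronglyMeasurable ?_
    filter_upwards with p
    rw [Real.norm_of_nonneg (pk_nonneg (hr _) _)]
    have := pk_le (hr p.1) p.2
    rwa [norm_rbpt h0] at this
  calc ∫ θ, ‖Po u (r * bpt θ)‖ ∂arcM
      ≤ ∫ θ, ∫ θ', ‖u θ'‖ * pk (r * bpt θ) θ' ∂arcM ∂arcM := by
        apply integral_mono_of_nonneg
        · filter_upwards with θ; positivity
        · exact hI.integral_prod_left
        · filter_upwards with θ; exact Po_norm_le u (hr θ)
    _ = ∫ θ', ∫ θ, ‖u θ'‖ * pk (r * bpt θ) θ' ∂arcM ∂arcM := integral_integral_swap hI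
    _ = ∫ θ, ‖u θ‖ ∂arcM := by
        congr 1; ext θ'
        rw [integral_const_mul]
        simp_rw [pk_symm r _ θ']
        rw [integral_pk (hr θ'), mul_one]

/-! ## Transfer from `AddCircle` -/

instance fact_two_pi : Fact (0 < 2 * Real.pi) := ⟨Real.two_pi_pos⟩

lemma mp_mk : MeasurePreserving (fun θ : ℝ => (θ : AddCircle (2 * Real.pi))) arcM
    AddCircle.haarAddCircle := by
  have h := AddCircle.measurePreserving_mk (2 * Real.pi) 0
  refine ⟨h.measurable, ?_⟩
  unfold arcM
  rw [Measure.map_smul]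
  have h2 := h.map_eq
  rw [zero_add] at h2
  rw [h2, AddCircle.volume_eq_smul_haarAddCircle, smul_smul, ENNReal.inv_mul_cancel, one_smul]
  · simp [Real.pi_pos]
  · exact ENNReal.ofReal_ne_top

lemma integral_mk {E : Type*} [NormedAddCommGroup E] [NormedSpace ℝ E]
    {h : AddCircle (2 * Real.pi) → E}
    (hh : AEStronglyMeasurable h AddCircle.haarAddCircle) :
    ∫ x, h x ∂AddCircle.haarAddCircle = ∫ θ : ℝ, h (θ : AddCircle (2 * Real.pi)) ∂arcM := by
  have hm := mp_mk.map_eq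
  rw [← hm, integral_map mp_mk.measurable.aemeasurable (by rw [hm]; exact hh)]

lemma fourier_bpt (n : ℤ) (θ : ℝ) :
    (fourier n (θ : AddCircle (2 * Real.pi)) : ℂ) = bpt θ ^ n := by
  rw [fourier_coe_apply]
  unfold bpt
  rw [← Complex.exp_int_mul]
  congr 1
  have : (Real.pi : ℂ) ≠ 0 := by exact_mod_cast Real.pi_ne_zero
  push_cast
  field_simp

/-- trigonometric polynomial -/
def trig (c : ℤ →₀ ℂ) (θ : ℝ) : ℂ := c.sum (fun n a => a * bpt θ ^ n)

lemma lift_int {k : ℝ → ℂ} (hk : Integrable k arcM) :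
    Integrable (AddCircle.liftIoc (2 * Real.pi) 0 k) AddCircle.haarAddCircle := by
  rw [← memLp_one_iff_integrable, memLp_haarAddCircle_iff]
  apply MeasureTheory.MemLp.memLp_liftIoc
  rw [zero_add, memLp_one_iff_integrable]
  unfold arcM at hk
  rwa [integrable_smul_measure (ENNReal.inv_ne_zero.2 ENNReal.ofReal_ne_top) (by simp [Real.pi_pos])] at hk

lemma ae_arcM_mem : ∀ᵐ θ ∂arcM, θ ∈ Ioc (0:ℝ) (2 * Real.pi) := by
  unfold arcM
  apply Measure.ae_smul_measure
  exact ae_restrict_mem measurableSet_Ioc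

lemma trig_dense {k : ℝ → ℂ} (hk : Integrable k arcM) {ε : ℝ} (hε : 0 < ε) :
    ∃ c : ℤ →₀ ℂ, ∫ θ, ‖k θ - trig c θ‖ ∂arcM < ε := by
  have hL := lift_int hk
  have hmem : hL.toL1 ∈ (Submodule.span ℂ (range (@fourierLp (2 * Real.pi) _ 1 _))).topologicalClosure := by
    rw [span_fourierLp_closure_eq_top (by simp)]; trivial
  have hm2 : hL.toL1 ∈ closure ((Submodule.span ℂ (range (@fourierLp (2 * Real.pi) _ 1 _)) :
      Set (Lp ℂ 1 AddCircle.haarAddCircle))) := hmem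
  rw [Metric.mem_closure_iff] at hm2
  obtain ⟨b, hb, hd⟩ := hm2 ε hε
  obtain ⟨c, rfl⟩ := (Finsupp.mem_span_range_iff_exists_finsupp).1 hb
  refine ⟨c, ?_⟩
  rw [dist_eq_norm, L1.norm_eq_integral_norm] at hd
  have hsum : ∀ s : Finset ℤ, ((∑ n ∈ s, c n • @fourierLp (2 * Real.pi) _ 1 _ n :
      Lp ℂ 1 AddCircle.haarAddCircle) : AddCircle (2 * Real.pi) → ℂ)
      =ᵐ[AddCircle.haarAddCircle] fun x => ∑ n ∈ s, c n * fourier n x := by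
    intro s
    induction s using Finset.induction_on with
    | empty => simp only [Finset.sum_empty]; exact Lp.coeFn_zero _ _ _
    | insert a s ha ih =>
      rw [Finset.sum_insert ha]
      filter_upwards [Lp.coeFn_add (c a • @fourierLp (2 * Real.pi) _ 1 _ a)
        (∑ n ∈ s, c n • @fourierLp (2 * Real.pi) _ 1 _ n), ih,
        Lp.coeFn_smul (c a) (@fourierLp (2 * Real.pi) _ 1 _ a),
        coeFn_fourierLp (T := 2 * Real.pi) 1 a] with x h1 h2 h3 h4
      rw [h1, Pi.add_apply, h2, h3, Pi.smul_apply, h4, Finset.sum_insert ha, smul_eq_mul]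
  have hfin : ∀ᵐ x ∂(AddCircle.haarAddCircle (T := 2 * Real.pi)),
      ‖(hL.toL1 - c.sum (fun n a => a • @fourierLp (2 * Real.pi) _ 1 _ n) :
        Lp ℂ 1 AddCircle.haarAddCircle) x‖
      = ‖AddCircle.liftIoc (2 * Real.pi) 0 k x - ∑ n ∈ c.support, c n * fourier n x‖ := by
    filter_upwards [Lp.coeFn_sub hL.toL1 (c.sum (fun n a => a • @fourierLp (2 * Real.pi) _ 1 _ n)),
      hsum c.support, hL.coeFn_toL1] with x h1 h2 h3
    rw [h1, Pi.sub_apply, h3]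
    unfold Finsupp.sum
    rw [h2]
  rw [integral_congr_ae hfin, integral_mk] at hd
  · refine lt_of_le_of_lt (le_of_eq ?_) hd
    apply integral_congr_ae
    filter_upwards [ae_arcM_mem] with θ hθ
    rw [AddCircle.liftIoc_zero_coe_apply hθ]
    simp only [fourier_bpt]
    rfl
  · refine (hL.aestronglyMeasurable.sub ?_).norm
    apply Continuous.aestronglyMeasurable
    exact continuous_finsetSum _ (fun n _ => continuous_const.mul (map_continuous _))

lemma trig_cont (c : ℤ →₀ ℂ) : Continuous (trig c) := by
  unfold trig Finsupp.sum
  exact continuous_finsetSum _ (fun n _ => continuous_const.mul (continuous_bpt_zpow n))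

lemma riesz_fischer {a : ℕ → ℂ} (ha : Summable (fun n => ‖a n‖ ^ 2)) :
    ∃ F : ℝ → ℂ, MemLp F 2 arcM ∧ (∀ n : ℕ, fc F n = a n) ∧ ∀ n : ℤ, n < 0 → fc F n = 0 := by
  let b : ℤ → ℂ := fun n => if 0 ≤ n then a n.toNat else 0
  have hb : Memℓp b 2 := by
    apply memℓp_gen
    have : Function.Injective (fun n : ℕ => (n : ℤ)) := Nat.cast_injective
    rw [← this.summable_iff]
    · simpa [b, Function.comp_def] using ha
    · intro n hn
      have : ¬ 0 ≤ n := fun h => hn ⟨n.toNat, by simp [h]⟩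
      simp [b, this]
  let F' := (fourierBasis (T := 2 * Real.pi)).repr.symm ⟨b, hb⟩
  have hc : ∀ n, fourierCoeff F' n = b n := by
    intro n
    rw [← fourierBasis_repr]
    simp [F']
  have hfc : ∀ n, fc (fun θ : ℝ => F' (θ : AddCircle (2 * Real.pi))) n = b n := by
    intro n
    rw [← hc n]
    unfold fc fourierCoeff
    rw [integral_mk]
    · congr 1; ext θ
      rw [fourier_bpt, smul_eq_mul, mul_comm]
    · exact ((map_continuous (fourier (-n))).aestronglyMeasurable).smul (Lp.aestronglyMeasurable _)
  refine ⟨fun θ => F' (θ : AddCircle (2 * Real.pi)), ?_, ?_, ?_⟩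
  · exact (Lp.memLp F').comp_measurePreserving mp_mk
  · intro n; rw [hfc]; simp [b]
  · intro n hn; rw [hfc]; simp [b, hn]

lemma Po_finsum {ι : Type*} (s : Finset ι) (c : ι → ℂ) (v : ι → ℝ → ℂ) (hv : ∀ i, Integrable (v i) arcM) {w : ℂ}
    (hw : ‖w‖ < 1) : Po (fun θ => ∑ i ∈ s, c i * v i θ) w = ∑ i ∈ s, c i * Po (v i) w := by
  unfold Po
  simp_rw [Finset.sum_mul]
  rw [integral_finsetSum]
  · congr 1; ext i; rw [← integral_const_mul]; congr 1; ext θ; ring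
  · intro i _
    exact int_pk ((hv i).const_mul _) hw

lemma Ct_finsum {ι : Type*} (s : Finset ι) (c : ι → ℂ) (v : ι → ℝ → ℂ) (hv : ∀ i, Integrable (v i) arcM) {w : ℂ}
    (hw : ‖w‖ < 1) : Ct (fun θ => ∑ i ∈ s, c i * v i θ) w = ∑ i ∈ s, c i * Ct (v i) w := by
  unfold Ct
  simp_rw [Finset.sum_mul]
  rw [integral_finsetSum]
  · congr 1; ext i; rw [← integral_const_mul]; congr 1; ext θ; ring
  · intro i _
    exact int_cker ((hv i).const_mul _) hw

lemma Po_zpow_circle (m : ℤ) {r : ℝ} (h0 : 0 ≤ r) (h1 : r < 1) (θ : ℝ) :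
    Po (fun θ => bpt θ ^ m) (r * bpt θ) = (r : ℂ) ^ m.natAbs * bpt θ ^ m := by
  rw [Po_zpow m (by rw [norm_rbpt h0]; exact h1)]
  split_ifs with h
  · rw [mul_pow]
    obtain ⟨n, rfl⟩ := Int.eq_ofNat_of_zero_le h
    simp
  · obtain ⟨n, hn⟩ := Int.eq_ofNat_of_zero_le (a := -m) (by omega)
    obtain rfl : m = -n := by omega
    simp [mul_pow, conj_bpt]

lemma ev_lt_one : ∀ᶠ r : ℝ in nhdsWithin 1 (Iio 1), 0 < r ∧ r < 1 := by
  filter_upwards [self_mem_nhdsWithin,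
    mem_nhdsWithin_of_mem_nhds (lt_mem_nhds (zero_lt_one (α := ℝ)))] with r h1 h2
  exact ⟨h2, h1⟩

lemma trig_int (c : ℤ →₀ ℂ) : Integrable (trig c) arcM := integrable_cont (trig_cont c)

lemma Po_trig_unif (c : ℤ →₀ ℂ) : ∀ ε > 0, ∀ᶠ r : ℝ in nhdsWithin 1 (Iio 1),
    ∀ θ, ‖Po (trig c) (r * bpt θ) - trig c θ‖ ≤ ε := by
  intro ε hε
  have hlim : Tendsto (fun r : ℝ => ∑ n ∈ c.support, ‖c n‖ * (1 - r ^ n.natAbs))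
      (nhdsWithin 1 (Iio 1)) (nhds 0) := by
    have : Continuous (fun r : ℝ => ∑ n ∈ c.support, ‖c n‖ * (1 - r ^ n.natAbs)) := by fun_prop
    have h := (this.tendsto 1).mono_left (nhdsWithin_le_nhds (s := Iio 1))
    simpa using h
  filter_upwards [hlim.eventually_le_const hε, ev_lt_one] with r hr h01 θ
  refine le_trans ?_ hr
  have hw : ‖(r:ℂ) * bpt θ‖ < 1 := by rw [norm_rbpt h01.1.le]; exact h01.2
  have : Po (trig c) (r * bpt θ) = ∑ n ∈ c.support, c n * Po (fun θ => bpt θ ^ n) (r * bpt θ) :=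
    Po_finsum c.support c (fun n θ => bpt θ ^ n) (fun n => int_zpow' n) hw
  rw [this]
  unfold trig Finsupp.sum
  rw [← Finset.sum_sub_distrib]
  refine (norm_sum_le _ _).trans (Finset.sum_le_sum ?_)
  intro n _
  rw [Po_zpow_circle n h01.1.le h01.2]
  have : c n * ((r:ℂ) ^ n.natAbs * bpt θ ^ n) - c n * bpt θ ^ n
    = c n * ((((r ^ n.natAbs - 1 : ℝ)) : ℂ) * bpt θ ^ n) := by push_cast; ring
  rw [this, norm_mul, norm_mul, norm_bpt_zpow, mul_one, Complex.norm_real, Real.norm_eq_abs,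
    abs_sub_comm, abs_of_nonneg]
  have := pow_le_one₀ h01.1.le h01.2.le (n := n.natAbs)
  linarith

lemma Po_cont_circle {u : ℝ → ℂ} (hu : Integrable u arcM) {r : ℝ} (h0 : 0 ≤ r) (h1 : r < 1) :
    Continuous (fun θ : ℝ => Po u (r * bpt θ)) := cont_circle (Po_continuousOn hu) h0 h1

lemma L1conv {u : ℝ → ℂ} (hu : Integrable u arcM) :
    Tendsto (fun r : ℝ => ∫ θ, ‖Po u (r * bpt θ) - u θ‖ ∂arcM) (nhdsWithin 1 (Iio 1)) (nhds 0) := by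
  rw [Metric.tendsto_nhds]
  intro ε hε
  obtain ⟨c, hc⟩ := trig_dense hu (show 0 < ε / 4 by positivity)
  filter_upwards [Po_trig_unif c (ε / 4) (by positivity), ev_lt_one] with r hr h01
  have hnn : 0 ≤ ∫ θ, ‖Po u (r * bpt θ) - u θ‖ ∂arcM := integral_nonneg (fun θ => norm_nonneg _)
  rw [dist_zero_right, Real.norm_of_nonneg hnn]
  have hd : Integrable (fun θ => u θ - trig c θ) arcM := hu.sub (trig_int c)
  have hw : ∀ θ, ‖(r:ℂ) * bpt θ‖ < 1 := fun θ => by rw [norm_rbpt h01.1.le]; exact h01.2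
  have hPd := integrable_cont (Po_cont_circle hd h01.1.le h01.2)
  calc ∫ θ, ‖Po u (r * bpt θ) - u θ‖ ∂arcM
      ≤ ∫ θ, (‖Po (fun θ => u θ - trig c θ) (r * bpt θ)‖ + ‖u θ - trig c θ‖ + ε / 4) ∂arcM := by
        apply integral_mono
        · exact ((integrable_cont (Po_cont_circle hu h01.1.le h01.2)).sub hu).norm
        · exact (hPd.norm.add hd.norm).add (integrable_const _)
        · intro θ
          have h1 := hr θ
          have h2 : Po u (r * bpt θ) - u θ = Po (fun θ => u θ - trig c θ) (r * bpt θ)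
            - (u θ - trig c θ) + (Po (trig c) (r * bpt θ) - trig c θ) := by
            rw [Po_sub hu (trig_int c) (hw θ)]; ring
          show ‖Po u (r * bpt θ) - u θ‖ ≤ _
          rw [h2]
          refine (norm_add_le _ _).trans (add_le_add ((norm_sub_le _ _)) h1)
    _ = (∫ θ, ‖Po (fun θ => u θ - trig c θ) (r * bpt θ)‖ ∂arcM) + (∫ θ, ‖u θ - trig c θ‖ ∂arcM) + ε / 4 := by
        rw [integral_add (f := fun θ => ‖Po (fun θ => u θ - trig c θ) (r * bpt θ)‖ +
          ‖u θ - trig c θ‖) (hPd.norm.add hd.norm) (integrable_const _),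
          integral_add hPd.norm hd.norm]
        simp
    _ < ε := by
        have := Po_L1 hd h01.1.le h01.2
        linarith

/-! ## The theorem of Fatou -/

lemma near_est {ψ : ℝ → ℝ} {x δ ε h : ℝ} (hδ : 0 < δ) (hh : 0 < h)
    (hψ0 : ∀ t, 0 ≤ ψ t) (hψ : IntegrableOn ψ (closedBall x δ))
    (hA : ∀ s, 0 < s → s ≤ δ → ∫ t in closedBall x s, ψ t ≤ ε * s) :
    ∫ t in closedBall x δ, ψ t * (h / (h ^ 2 + (t - x) ^ 2)) ≤ 8 * ε := by
  have hε : 0 ≤ ε := by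
    have h1 := hA δ hδ le_rfl
    have h2 : 0 ≤ ∫ t in closedBall x δ, ψ t := integral_nonneg hψ0
    by_contra hcon
    push Not at hcon
    nlinarith
  obtain ⟨N, hN⟩ := pow_unbounded_of_one_lt (δ / h) (one_lt_two (α := ℝ))
  have hN' : δ ≤ 2 ^ N * h := by rw [div_lt_iff₀ hh] at hN; exact hN.le
  have hsub : ∀ j : ℕ, closedBall x (min (2 ^ j * h) δ) ⊆ closedBall x δ :=
    fun j => closedBall_subset_closedBall (min_le_right _ _)
  have hpt : ∀ t ∈ closedBall x δ, ψ t * (h / (h ^ 2 + (t - x) ^ 2)) ≤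
      ∑ j ∈ Finset.range (N + 1), (4 * (1 / 4) ^ j / h) *
        (closedBall x (min (2 ^ j * h) δ)).indicator ψ t := by
    intro t ht
    rw [mem_closedBall, Real.dist_eq] at ht
    have hex : ∃ j : ℕ, |t - x| ≤ 2 ^ j * h := ⟨N, ht.trans hN'⟩
    classical
    let j := Nat.find hex
    have hj : |t - x| ≤ 2 ^ j * h := Nat.find_spec hex
    have hjN : j ≤ N := Nat.find_min' hex (ht.trans hN')
    have hle : ψ t * (h / (h ^ 2 + (t - x) ^ 2)) ≤ (4 * (1 / 4) ^ j / h) *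
        (closedBall x (min (2 ^ j * h) δ)).indicator ψ t := by
      rw [indicator_of_mem (by rw [mem_closedBall, Real.dist_eq]; exact le_min hj ht), mul_comm]
      apply mul_le_mul_of_nonneg_right _ (hψ0 t)
      rw [div_le_div_iff₀ (by positivity) hh]
      rcases Nat.eq_zero_or_pos j with h0 | h0
      · rw [h0]; simp; nlinarith [sq_nonneg (t - x)]
      · have hlt : ¬ |t - x| ≤ 2 ^ (j - 1) * h := Nat.find_min hex (Nat.sub_lt h0 one_pos)
        push Not at hlt
        obtain ⟨i, hi⟩ : ∃ i, j = i + 1 := ⟨j - 1, by omega⟩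
        rw [hi] at hlt ⊢
        simp only [Nat.add_sub_cancel] at hlt
        have h2 : (2 ^ i * h) ^ 2 ≤ (t - x) ^ 2 := by
          rw [← sq_abs (t - x)]
          exact pow_le_pow_left₀ (by positivity) hlt.le 2
        have h4 : ((1:ℝ) / 4) ^ (i + 1) * 4 * (2 ^ i) ^ 2 = 1 := by
          rw [pow_succ, ← pow_mul, mul_comm i 2, pow_mul]
          norm_num
          have this : ((1:ℝ) / 4) ^ i * 4 ^ i = 1 := by rw [← mul_pow]; norm_num
          linear_combination this
        have hp : 0 ≤ 4 * ((1:ℝ) / 4) ^ (i + 1) := by positivity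
        have h5 := mul_le_mul_of_nonneg_left h2 hp
        have h6 : 4 * ((1:ℝ) / 4) ^ (i + 1) * (2 ^ i * h) ^ 2 = h * h := by
          linear_combination h ^ 2 * h4
        nlinarith [mul_nonneg hp (sq_nonneg h)]
    refine hle.trans ?_
    apply Finset.single_le_sum (f := fun j : ℕ => (4 * (1 / 4) ^ j / h) *
        (closedBall x (min (2 ^ j * h) δ)).indicator ψ t)
    · intro i _
      exact mul_nonneg (by positivity) (indicator_nonneg (fun t _ => hψ0 t) t)
    · simp; omega
  have hIntg : ∀ j : ℕ, IntegrableOn (fun t => (4 * (1 / 4) ^ j / h) *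
        (closedBall x (min (2 ^ j * h) δ)).indicator ψ t) (closedBall x δ) := by
    intro j
    apply Integrable.const_mul
    exact Integrable.indicator hψ measurableSet_closedBall
  calc ∫ t in closedBall x δ, ψ t * (h / (h ^ 2 + (t - x) ^ 2))
      ≤ ∫ t in closedBall x δ, ∑ j ∈ Finset.range (N + 1), (4 * (1 / 4) ^ j / h) *
        (closedBall x (min (2 ^ j * h) δ)).indicator ψ t := by
        apply integral_mono_of_nonneg
        · filter_upwards with t
          exact mul_nonneg (hψ0 t) (by positivity)
        · exact integrable_finsetSum _ (fun j _ => hIntg j)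
        · filter_upwards [ae_restrict_mem measurableSet_closedBall] with t ht
          exact hpt t ht
    _ = ∑ j ∈ Finset.range (N + 1), (4 * (1 / 4) ^ j / h) *
          ∫ t in closedBall x (min (2 ^ j * h) δ), ψ t := by
        rw [integral_finsetSum _ (fun j _ => hIntg j)]
        apply Finset.sum_congr rfl
        intro j _
        rw [integral_const_mul, setIntegral_indicator measurableSet_closedBall,
          inter_eq_self_of_subset_right (hsub j)]
    _ ≤ ∑ j ∈ Finset.range (N + 1), 4 * ε * (1 / 2) ^ j := by
        apply Finset.sum_le_sum
        intro j _
        have h1 := hA (min (2 ^ j * h) δ) (by positivity) (min_le_right _ _)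
        have h2 : ε * min (2 ^ j * h) δ ≤ ε * (2 ^ j * h) :=
          mul_le_mul_of_nonneg_left (min_le_left _ _) hε
        calc (4 * (1 / 4) ^ j / h) * ∫ t in closedBall x (min (2 ^ j * h) δ), ψ t
            ≤ (4 * (1 / 4) ^ j / h) * (ε * (2 ^ j * h)) :=
              mul_le_mul_of_nonneg_left (h1.trans h2) (by positivity)
          _ = 4 * ε * ((1 / 4) ^ j * 2 ^ j) := by field_simp
          _ = 4 * ε * (1 / 2) ^ j := by rw [← mul_pow]; norm_num
    _ ≤ 8 * ε := by
        rw [← Finset.mul_sum]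
        have : ∑ j ∈ Finset.range (N + 1), ((1:ℝ) / 2) ^ j ≤ 2 := by
          have := (summable_geometric_two).sum_le_tsum (Finset.range (N+1))
            (fun i _ => by positivity)
          rwa [tsum_geometric_two] at this
        nlinarith

lemma pk_circle {r : ℝ} (x θ : ℝ) : pk (r * bpt x) θ =
    (1 - r ^ 2) / ((1 - r) ^ 2 + 4 * r * Real.sin ((x - θ) / 2) ^ 2) := by
  unfold pk
  have h1 : ‖(r:ℂ) * bpt x‖ ^ 2 = r ^ 2 := by rw [norm_mul, norm_bpt]; simp
  have h2 : (r:ℂ) * bpt x * (bpt θ)⁻¹ = r * Complex.exp (((x - θ : ℝ) : ℂ) * Complex.I) := by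
    unfold bpt
    rw [← Complex.exp_neg, mul_assoc, ← Complex.exp_add]; congr 2; push_cast; ring
  rw [h1, h2, ← Complex.normSq_eq_norm_sq, Complex.normSq_apply]
  congr 1
  have hre : (1 - (r:ℂ) * Complex.exp (((x - θ : ℝ) : ℂ) * Complex.I)).re
    = 1 - r * Real.cos (x - θ) := by
    rw [Complex.sub_re, Complex.re_ofReal_mul, Complex.exp_ofReal_mul_I_re]; simp
  have him : (1 - (r:ℂ) * Complex.exp (((x - θ : ℝ) : ℂ) * Complex.I)).im
    = - (r * Real.sin (x - θ)) := by
    rw [Complex.sub_im, Complex.im_ofReal_mul, Complex.exp_ofReal_mul_I_im]; simp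
  rw [hre, him, Real.sin_sq_eq_half_sub, show 2 * ((x - θ) / 2) = x - θ by ring]
  nlinarith [Real.sin_sq_add_cos_sq (x - θ)]

lemma pk_near {r : ℝ} (hr : 1 / 2 ≤ r) (hr1 : r < 1) {x θ : ℝ} (ht : |θ - x| ≤ Real.pi) :
    pk (r * bpt x) θ ≤ 10 * ((1 - r) / ((1 - r) ^ 2 + (θ - x) ^ 2)) := by
  rw [pk_circle, ← mul_div_assoc]
  have hs : (θ - x) ^ 2 / 10 ≤ Real.sin ((x - θ) / 2) ^ 2 := by
    have h1 : |(x - θ) / 2| ≤ Real.pi / 2 := by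
      rw [abs_div, abs_sub_comm]; simp; linarith
    have h2 := Real.mul_abs_le_abs_sin h1
    have h3 : (2 / Real.pi * |(x - θ) / 2|) ^ 2 ≤ |Real.sin ((x - θ) / 2)| ^ 2 :=
      pow_le_pow_left₀ (by positivity) h2 2
    rw [sq_abs, mul_pow, sq_abs] at h3
    refine le_trans ?_ h3
    have hpi : Real.pi ^ 2 ≤ 10 := by nlinarith [Real.pi_lt_d2, Real.pi_gt_three]
    have : (2 / Real.pi) ^ 2 * ((x - θ) / 2) ^ 2 = (θ - x) ^ 2 / Real.pi ^ 2 := by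
      field_simp; ring
    rw [this]
    gcongr
  have hpos : 0 < (1 - r) ^ 2 := by have : 0 < 1 - r := by linarith
                                    positivity
  have hs0 : 0 ≤ Real.sin ((x - θ) / 2) ^ 2 := sq_nonneg _
  rw [div_le_div_iff₀ (by nlinarith) (by nlinarith [sq_nonneg (θ - x)])]
  have e1 : (1 - r ^ 2) ≤ 2 * (1 - r) := by nlinarith
  have e2 : (1 - r) ^ 2 + (θ - x) ^ 2 ≤ 5 * ((1 - r) ^ 2 + 4 * r * Real.sin ((x - θ) / 2) ^ 2) := by
    nlinarith
  have := mul_le_mul e1 e2 (by nlinarith [sq_nonneg (θ - x)]) (by linarith)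
  linarith

lemma pk_far {r δ : ℝ} (hr : 1 / 2 ≤ r) (hr1 : r < 1) {x θ : ℝ} (hδ : 0 < δ)
    (hx0 : δ ≤ x) (hx1 : x ≤ 2 * Real.pi - δ) (hθ : θ ∈ Ioc (0:ℝ) (2 * Real.pi))
    (ht : δ ≤ |θ - x|) :
    pk (r * bpt x) θ ≤ (1 - r) / Real.sin (δ / 2) ^ 2 := by
  rw [pk_circle]
  have hδpi : δ ≤ Real.pi := by linarith
  have hd0 : 0 < Real.sin (δ / 2) := Real.sin_pos_of_pos_of_lt_pi (by linarith) (by linarith)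
  have hle : |θ - x| ≤ 2 * Real.pi - δ := by
    rw [abs_le]; constructor <;> linarith [hθ.1, hθ.2]
  have hs : Real.sin (δ / 2) ^ 2 ≤ Real.sin ((x - θ) / 2) ^ 2 := by
    have h1 : Real.sin (δ / 2) ≤ Real.sin (|θ - x| / 2) := by
      rcases le_total (|θ - x| / 2) (Real.pi / 2) with h | h
      · exact Real.sin_le_sin_of_le_of_le_pi_div_two (by linarith) h (by linarith)
      · rw [← Real.sin_pi_sub (|θ - x| / 2)]
        exact Real.sin_le_sin_of_le_of_le_pi_div_two (by linarith) (by linarith) (by linarith)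
    have h2 : Real.sin ((x - θ) / 2) ^ 2 = Real.sin (|θ - x| / 2) ^ 2 := by
      rw [abs_sub_comm]
      rcases abs_choice (x - θ) with h | h
      · rw [h]
      · rw [h, neg_div, Real.sin_neg, neg_sq]
    rw [h2]
    exact pow_le_pow_left₀ hd0.le h1 2
  have hs0 : 0 < Real.sin (δ / 2) ^ 2 := by positivity
  rw [div_le_div_iff₀ (by nlinarith [sq_nonneg (1 - r)]) hs0]
  have e1 : (1 - r ^ 2) ≤ 2 * (1 - r) := by nlinarith
  have e2 : 2 * Real.sin (δ / 2) ^ 2 ≤ ((1 - r) ^ 2 + 4 * r * Real.sin ((x - θ) / 2) ^ 2) := by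
    nlinarith [sq_nonneg (1 - r)]
  nlinarith [mul_le_mul_of_nonneg_left e2 (show 0 ≤ 1 - r by linarith),
    mul_le_mul_of_nonneg_right e1 hs0.le]

lemma arcM_int_iff {E : Type*} [NormedAddCommGroup E] {u : ℝ → E} :
    Integrable u arcM ↔ IntegrableOn u (Ioc 0 (2 * Real.pi)) := by
  unfold arcM
  rw [integrable_smul_measure]
  · rfl
  · exact ENNReal.inv_ne_zero.2 ENNReal.ofReal_ne_top
  · exact ENNReal.inv_ne_top.2 (by simp [Real.pi_pos])

lemma arcM_ac : arcM ≪ volume := by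
  unfold arcM
  exact (Measure.absolutelyContinuous_of_le Measure.restrict_le_self).smul_left _

lemma Po_sub_const {u : ℝ → ℂ} (hu : Integrable u arcM) (c : ℂ) {w : ℂ} (hw : ‖w‖ < 1) :
    ‖Po u w - c‖ ≤ ∫ θ, ‖u θ - c‖ * pk w θ ∂arcM := by
  have h := Po_norm_le (fun θ => u θ - c) hw
  rw [Po_sub hu (integrable_const c) hw] at h
  have : Po (fun _ => c) w = c := by
    unfold Po
    rw [integral_const_mul, integral_complex_ofReal, integral_pk hw]; simp
  rwa [this] at h

theorem fatou {u : ℝ → ℂ} (hu : Integrable u arcM) : ∀ᵐ θ ∂arcM,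
    Tendsto (fun r : ℝ => Po u (r * bpt θ)) (nhdsWithin 1 (Iio 1)) (nhds (u θ)) := by
  set I := Ioc (0:ℝ) (2 * Real.pi) with hI
  set v := I.indicator u with hv
  have hui : IntegrableOn u I := arcM_int_iff.1 hu
  have hvi : Integrable v := (integrable_indicator_iff measurableSet_Ioc).2 hui
  have hL := IsUnifLocDoublingMeasure.ae_tendsto_average_norm_sub volume hvi.locallyIntegrable 1
  have hne : ∀ᵐ x : ℝ, x ≠ 2 * Real.pi := by
    simp [ae_iff]
  filter_upwards [arcM_ac.ae_le hL, arcM_ac.ae_le hne, ae_arcM_mem] with x hx hxne hxI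
  have hx0 : 0 < x := hxI.1
  have hx1 : x < 2 * Real.pi := lt_of_le_of_ne hxI.2 hxne
  have hav := hx (fun _ : ℝ => x) id (l := nhdsWithin 0 (Ioi 0)) tendsto_id (by
    filter_upwards [self_mem_nhdsWithin] with s hs
    simp only [mem_closedBall, dist_self, id, one_mul]; exact le_of_lt hs)
  rw [Metric.tendsto_nhds]
  intro ε hε
  set ε' := ε / 400 with hε'
  have hev : ∀ᶠ s : ℝ in nhdsWithin 0 (Ioi 0), (⨍ y in closedBall x s, ‖v y - v x‖) < ε' := by
    have := (Metric.tendsto_nhds.1 hav) ε' (by positivity)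
    filter_upwards [this] with s hs
    rw [Real.dist_eq, sub_zero] at hs
    exact lt_of_abs_lt hs
  rw [eventually_nhdsWithin_iff, Metric.eventually_nhds_iff] at hev
  obtain ⟨δ0, hδ0, hev⟩ := hev
  set δ := min (δ0 / 2) (min x (2 * Real.pi - x)) with hδdef
  have hδ : 0 < δ := by
    rw [hδdef]; apply lt_min (by positivity); apply lt_min hx0; linarith
  have hδ1 : δ ≤ δ0 / 2 := min_le_left _ _
  have hδ2 : δ ≤ x := (min_le_right _ _).trans (min_le_left _ _)
  have hδ3 : δ ≤ 2 * Real.pi - x := (min_le_right _ _).trans (min_le_right _ _)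
  set ψ : ℝ → ℝ := fun t => ‖v t - v x‖ with hψ
  have hψI : ∀ a b, IntegrableOn ψ (Icc a b) := by
    intro a b
    exact (hvi.integrableOn.sub (integrable_const _)).norm
  have hψ0 : ∀ t, 0 ≤ ψ t := fun t => norm_nonneg _
  have hA : ∀ s, 0 < s → s ≤ δ → ∫ t in closedBall x s, ψ t ≤ (2 * ε') * s := by
    intro s hs hsδ
    have h1 := hev (y := s) (by rw [Real.dist_eq, sub_zero, abs_of_pos hs]; linarith) hs
    rw [setAverage_eq, measureReal_def, Real.volume_closedBall, ENNReal.toReal_ofReal (by positivity), smul_eq_mul,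
      inv_mul_lt_iff₀ (by positivity)] at h1
    show ∫ t in closedBall x s, ‖v t - v x‖ ≤ _
    nlinarith
  set S := Real.sin (δ / 2) ^ 2 with hS
  have hSpos : 0 < S := by
    have : 0 < Real.sin (δ / 2) := Real.sin_pos_of_pos_of_lt_pi (by linarith) (by linarith)
    positivity
  set Q := ∫ t in I, ψ t with hQ
  have hQI : IntegrableOn ψ I := (hψI 0 (2 * Real.pi)).mono_set Ioc_subset_Icc_self
  have hlim : Tendsto (fun r : ℝ => (1 - r) / S * Q) (nhdsWithin 1 (Iio 1)) (nhds 0) := by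
    have : Tendsto (fun r : ℝ => (1 - r) / S * Q) (nhds 1) (nhds ((1 - 1) / S * Q)) :=
      Continuous.tendsto (by fun_prop) 1
    simp only [sub_self, zero_div, zero_mul] at this
    exact this.mono_left nhdsWithin_le_nhds
  have hhalf : ∀ᶠ r : ℝ in nhdsWithin 1 (Iio 1), 1 / 2 ≤ r := by
    apply nhdsWithin_le_nhds
    exact eventually_ge_nhds (by norm_num)
  filter_upwards [ev_lt_one, hhalf, hlim.eventually (gt_mem_nhds (show (0:ℝ) < ε / 4 by positivity))]
    with r hr hr2 hrQ
  have hw : ‖(r:ℂ) * bpt x‖ < 1 := by rw [norm_rbpt hr.1.le]; exact hr.2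
  rw [dist_eq_norm]
  set h := 1 - r with hh
  have hhp : 0 < h := by linarith [hr.2]
  have hvx : v x = u x := indicator_of_mem hxI u
  have hBI : IntegrableOn ψ (closedBall x δ) := by
    rw [Real.closedBall_eq_Icc]; exact hψI _ _
  have hnear := near_est hδ hhp hψ0 hBI hA
  have hcontq : Continuous (fun t : ℝ => h / (h ^ 2 + (t - x) ^ 2)) := by
    apply Continuous.div (by fun_prop) (by fun_prop)
    intro t; positivity
  have hBI2 : IntegrableOn (fun t => ψ t * (h / (h ^ 2 + (t - x) ^ 2))) (closedBall x δ) := by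
    apply IntegrableOn.mul_continuousOn hBI hcontq.continuousOn
    rw [Real.closedBall_eq_Icc]; exact isCompact_Icc
  set q : ℝ → ℝ := (closedBall x δ).indicator (fun t => ψ t * (h / (h ^ 2 + (t - x) ^ 2))) with hq
  have hq0 : ∀ t, 0 ≤ q t := fun t => indicator_nonneg (fun t _ => mul_nonneg (hψ0 t) (by positivity)) t
  have hqi : Integrable q := (integrable_indicator_iff measurableSet_closedBall).2 hBI2
  have hqle : ∫ t in I, q t ≤ 8 * (2 * ε') := by
    calc ∫ t in I, q t ≤ ∫ t, q t := setIntegral_le_integral hqi (Eventually.of_forall hq0)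
      _ = ∫ t in closedBall x δ, ψ t * (h / (h ^ 2 + (t - x) ^ 2)) :=
        integral_indicator measurableSet_closedBall
      _ ≤ _ := hnear
  have hbig : ∫ t in I, ‖u t - u x‖ * pk (r * bpt x) t ≤ ∫ t in I, (10 * q t + h / S * ψ t) := by
    apply integral_mono_of_nonneg
    · filter_upwards with t
      exact mul_nonneg (norm_nonneg _) (pk_nonneg hw t)
    · exact (hqi.integrableOn.const_mul 10).add (hQI.const_mul _)
    · filter_upwards [ae_restrict_mem measurableSet_Ioc] with t ht
      have hvt : v t = u t := indicator_of_mem ht u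
      have e : ‖u t - u x‖ = ψ t := by rw [hψ]; simp only [hvt, hvx]
      rw [e]
      by_cases hc : t ∈ closedBall x δ
      · have hd : |t - x| ≤ δ := by rwa [mem_closedBall, Real.dist_eq] at hc
        have h1 := pk_near hr2 hr.2 (x := x) (θ := t) (by linarith)
        have h2 : q t = ψ t * (h / (h ^ 2 + (t - x) ^ 2)) := indicator_of_mem hc _
        have h3 := mul_le_mul_of_nonneg_left h1 (hψ0 t)
        have h4 : 0 ≤ h / S * ψ t := mul_nonneg (by positivity) (hψ0 t)
        rw [h2]
        linarith
      · have hd : δ ≤ |t - x| := by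
          rw [mem_closedBall, Real.dist_eq] at hc; push Not at hc; exact hc.le
        have h1 := pk_far hr2 hr.2 hδ hδ2 (by linarith) ht hd
        have h3 := mul_le_mul_of_nonneg_left h1 (hψ0 t)
        have := hq0 t
        linarith
  rw [integral_add (hqi.integrableOn.const_mul 10) (hQI.const_mul _), integral_const_mul,
    integral_const_mul] at hbig
  have hfin := Po_sub_const hu (u x) hw
  have hsc : ∫ θ, ‖u θ - u x‖ * pk (r * bpt x) θ ∂arcM ≤ ∫ t in I, ‖u t - u x‖ * pk (r * bpt x) t := by
    rw [integral_arcM, intervalIntegral.integral_of_le (by positivity), smul_eq_mul]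
    apply mul_le_of_le_one_left
    · exact integral_nonneg (fun t => mul_nonneg (norm_nonneg _) (pk_nonneg hw t))
    · apply inv_le_one_of_one_le₀; linarith [Real.pi_gt_three]
  have : 10 * (8 * (2 * ε')) ≤ ε / 2 := by rw [hε']; linarith
  calc ‖Po u (r * bpt x) - u x‖ ≤ (10 * ∫ a in I, q a) + h / S * ∫ a in I, ψ a := by linarith
    _ < ε := by linarith

/-! ## Boundary functions of bounded analytic functions -/

lemma fc_unique {u : ℝ → ℂ} (hu : Integrable u arcM) (h : ∀ n, fc u n = 0) :
    u =ᵐ[arcM] 0 := by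
  filter_upwards [fatou hu] with θ hθ
  have hz : ∀ᶠ r : ℝ in nhdsWithin 1 (Iio 1), Po u (r * bpt θ) = 0 := by
    filter_upwards [ev_lt_one] with r hr
    have hw : ‖(r:ℂ) * bpt θ‖ < 1 := by rw [norm_rbpt hr.1.le]; exact hr.2
    have h1 : Ct u (r * bpt θ) = 0 := by
      refine (Ct_hasSum hu hw).unique ?_
      simp only [h, zero_mul]; exact hasSum_zero
    have h2 : Ct (fun θ => (starRingEnd ℂ) (u θ)) (r * bpt θ) = 0 := by
      refine (Ct_hasSum (integrable_conj hu) hw).unique ?_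
      simp only [fc_conj, h, map_zero, zero_mul]; exact hasSum_zero
    rw [Po_eq hu hw, h1, h2, ← fc_zero, h]; simp
  refine tendsto_nhds_unique hθ ?_
  exact (tendsto_congr' hz).2 tendsto_const_nhds

lemma Po_eq_Ct {u : ℝ → ℂ} (hu : Integrable u arcM) (h : ∀ n : ℤ, n < 0 → fc u n = 0) {w : ℂ}
    (hw : ‖w‖ < 1) : Po u w = Ct u w := by
  have h2 : Ct (fun θ => (starRingEnd ℂ) (u θ)) w = (starRingEnd ℂ) (fc u 0) := by
    refine (Ct_hasSum (integrable_conj hu) hw).unique ?_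
    convert hasSum_single (f := fun n : ℕ => fc (fun θ => (starRingEnd ℂ) (u θ)) n * w ^ n) 0 ?_ using 1
    · simp [fc_conj]
    · intro n hn
      rw [fc_conj, h (-(n:ℤ)) (by omega)]; simp
  rw [Po_eq hu hw, h2, ← fc_zero]; simp

lemma bd_unique {f : ℂ → ℂ} {F G : ℝ → ℂ} (hF : BoundaryFn f F) (hG : BoundaryFn f G) :
    F =ᵐ[arcM] G := by
  filter_upwards [hF, hG] with θ h1 h2
  exact tendsto_nhds_unique h1 h2

lemma ct_congr {u v : ℝ → ℂ} (h : u =ᵐ[arcM] v) (w : ℂ) : Ct u w = Ct v w := by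
  apply integral_congr_ae
  filter_upwards [h] with θ hθ
  rw [hθ]

lemma inner_fin (s : Finset ℕ) (b : ℕ → ℂ) {u : ℝ → ℂ} (hu : Integrable u arcM) :
    ∫ θ, (starRingEnd ℂ) (∑ n ∈ s, b n * bpt θ ^ n) * u θ ∂arcM
      = ∑ n ∈ s, (starRingEnd ℂ) (b n) * fc u n := by
  have : ∀ θ, (starRingEnd ℂ) (∑ n ∈ s, b n * bpt θ ^ n) * u θ
      = ∑ n ∈ s, (starRingEnd ℂ) (b n) * (u θ * bpt θ ^ (-(n:ℤ))) := by
    intro θ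
    rw [map_sum, Finset.sum_mul]
    apply Finset.sum_congr rfl
    intro n _
    rw [map_mul, map_pow, conj_bpt, zpow_neg, zpow_natCast, inv_pow]; ring
  simp only [this]
  rw [integral_finsetSum _ (fun n _ => (int_zpow hu _).const_mul _)]
  apply Finset.sum_congr rfl
  intro n _
  rw [integral_const_mul]; rfl

lemma bessel_fin (s : Finset ℕ) (b : ℕ → ℂ) {u : ℝ → ℂ} (hu : Continuous u)
    (hb : ∀ n : ℕ, fc u n = b n) : ∑ n ∈ s, ‖b n‖ ^ 2 ≤ ∫ θ, ‖u θ‖ ^ 2 ∂arcM := by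
  set p : ℝ → ℂ := fun θ => ∑ n ∈ s, b n * bpt θ ^ n with hp
  have hpc : Continuous p := by
    apply continuous_finsetSum
    intro n _
    exact continuous_const.mul (continuous_bpt.pow n)
  have hfp : ∀ n ∈ s, fc p n = b n := by
    intro n hn
    unfold fc
    have : ∀ θ, p θ * bpt θ ^ (-(n:ℤ)) = ∑ m ∈ s, b m * (bpt θ ^ (m:ℤ) * bpt θ ^ (-(n:ℤ))) := by
      intro θ
      rw [hp]; simp only [Finset.sum_mul]
      apply Finset.sum_congr rfl
      intro m _
      rw [zpow_natCast]; ring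
    simp only [this]
    rw [integral_finsetSum _ (fun (m : ℕ) _ => (int_zpow (int_zpow' (m:ℤ)) _).const_mul _)]
    have h2 : ∀ m : ℕ, ∫ θ, b m * (bpt θ ^ (m:ℤ) * bpt θ ^ (-(n:ℤ))) ∂arcM
        = if n = m then b m else 0 := by
      intro m
      rw [integral_const_mul]
      have := fc_zpow m n
      unfold fc at this
      rw [this]
      simp
    simp only [h2]
    simp [hn]
  have e1 := inner_fin s b (integrable_cont hu)
  have e2 := inner_fin s b (integrable_cont hpc)
  have hT1 : ∫ θ, (starRingEnd ℂ) (p θ) * u θ ∂arcM = ((∑ n ∈ s, ‖b n‖ ^ 2 : ℝ) : ℂ) := by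
    rw [e1]; push_cast
    apply Finset.sum_congr rfl
    intro n _
    rw [hb, Complex.conj_mul']
  have hT2 : ∫ θ, (starRingEnd ℂ) (p θ) * p θ ∂arcM = ((∑ n ∈ s, ‖b n‖ ^ 2 : ℝ) : ℂ) := by
    rw [e2]; push_cast
    apply Finset.sum_congr rfl
    intro n hn
    rw [hfp n hn, Complex.conj_mul']
  have hre : ∀ v : ℝ → ℂ, Continuous v →
      ∫ θ, ((starRingEnd ℂ) (p θ) * v θ).re ∂arcM = (∫ θ, (starRingEnd ℂ) (p θ) * v θ ∂arcM).re := by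
    intro v hv
    have hc : Continuous (fun θ => (starRingEnd ℂ) (p θ) * v θ) :=
      (Complex.continuous_conj.comp hpc).mul hv
    exact integral_re (𝕜 := ℂ) (integrable_cont hc)
  have h0 : 0 ≤ ∫ θ, ‖u θ - p θ‖ ^ 2 ∂arcM := integral_nonneg (fun θ => by positivity)
  have hpt : ∀ θ, ‖u θ - p θ‖ ^ 2 = ‖u θ‖ ^ 2 - 2 * ((starRingEnd ℂ) (p θ) * u θ).re
      + ((starRingEnd ℂ) (p θ) * p θ).re := by
    intro θ
    rw [← Complex.normSq_eq_norm_sq, ← Complex.normSq_eq_norm_sq, Complex.normSq_apply,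
      Complex.normSq_apply]
    simp only [Complex.sub_re, Complex.sub_im, Complex.mul_re, Complex.conj_re, Complex.conj_im]
    ring
  have hcu : Continuous (fun θ => ((starRingEnd ℂ) (p θ) * u θ).re) :=
    Complex.continuous_re.comp ((Complex.continuous_conj.comp hpc).mul hu)
  have hcp : Continuous (fun θ => ((starRingEnd ℂ) (p θ) * p θ).re) :=
    Complex.continuous_re.comp ((Complex.continuous_conj.comp hpc).mul hpc)
  have hcn : Continuous (fun θ => ‖u θ‖ ^ 2) := by fun_prop
  simp only [hpt] at h0
  rw [integral_add (integrable_cont (by fun_prop)) (integrable_cont hcp),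
    integral_sub (integrable_cont hcn) (integrable_cont (by fun_prop)), integral_const_mul, hre u hu, hre p hpc,
    hT1, hT2, Complex.ofReal_re] at h0
  linarith

lemma hinf_taylor {f : ℂ → ℂ} (hf : AnalyticOnDisc f) : ∃ a : ℕ → ℂ,
    (∀ w, ‖w‖ < 1 → HasSum (fun n => a n * w ^ n) (f w)) ∧
    ∀ r : ℝ, 0 < r → r < 1 → ∀ n : ℕ, fc (fun θ => f (r * bpt θ)) n = a n * r ^ n := by
  have hs : ∃ a : ℕ → ℂ, ∀ w, ‖w‖ < 1 → HasSum (fun n => a n * w ^ n) (f w) := by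
    refine ⟨fun n => (n.factorial : ℂ)⁻¹ * iteratedDeriv n f 0, fun w hw => ?_⟩
    have := Complex.hasSum_taylorSeries_on_ball (f := f) (c := 0) (r := 1) hf (z := w) (by simpa using hw)
    have e : (fun n => (n.factorial : ℂ)⁻¹ * iteratedDeriv n f 0 * w ^ n) =
        fun n => (n.factorial : ℂ)⁻¹ • (w - 0) ^ n • iteratedDeriv n f 0 := by
      funext n
      simp only [smul_eq_mul, sub_zero]; ring
    rw [e]; exact this
  obtain ⟨a, ha⟩ := hs
  refine ⟨a, ha, fun r h0 h1 n => ?_⟩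
  have hrn : ‖(r:ℂ)‖ < 1 := by simpa [abs_of_pos h0] using h1
  have hsum : Summable (fun j => ‖a j * (r:ℂ) ^ j‖) := (ha r hrn).summable.norm
  have key := hasSum_integral_of_summable_integral_norm
    (F := fun (j : ℕ) (θ : ℝ) => a j * (r:ℂ) ^ j * (bpt θ ^ (j:ℤ) * bpt θ ^ (-(n:ℤ)))) (μ := arcM)
    (fun j => (int_zpow (int_zpow' j) _).const_mul _) (by
      simp only [norm_mul, norm_bpt_zpow, mul_one, integral_const, probReal_univ, one_smul]
      simpa using hsum)
  have hI : ∀ j : ℕ, ∫ θ, a j * (r:ℂ) ^ j * (bpt θ ^ (j:ℤ) * bpt θ ^ (-(n:ℤ))) ∂arcM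
      = if n = j then a j * (r:ℂ) ^ j else 0 := by
    intro j
    rw [integral_const_mul]
    have := fc_zpow j n
    unfold fc at this
    rw [this]; simp
  simp only [hI] at key
  have h2 := key.unique (hasSum_single n (fun j hj => if_neg (Ne.symm hj)))
  rw [if_pos rfl] at h2
  rw [← h2]
  unfold fc
  congr 1
  ext θ
  have hw : ‖(r:ℂ) * bpt θ‖ < 1 := by rw [norm_rbpt h0.le]; exact h1
  show f (r * bpt θ) * _ = _
  rw [← (ha _ hw).tsum_eq, ← tsum_mul_right]
  congr 1; ext j
  rw [mul_pow, zpow_natCast]; ring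

/-- the package of properties of a boundary function -/
structure BdP (f : ℂ → ℂ) (F : ℝ → ℂ) : Prop where
  int : Integrable F arcM
  bd : ∃ C, (∀ᵐ θ ∂arcM, ‖F θ‖ ≤ C) ∧ ∀ z ∈ uDisc, ‖f z‖ ≤ C
  neg : ∀ n : ℤ, n < 0 → fc F n = 0
  ct : ∀ w, ‖w‖ < 1 → f w = Ct F w
  bf : BoundaryFn f F

lemma hinf_bd {f : ℂ → ℂ} (hf : MemHinf f) : ∃ F, BdP f F := by
  obtain ⟨hd, C, hC⟩ := hf
  obtain ⟨a, ha, har⟩ := hinf_taylor hd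
  have hC0 : 0 ≤ C := (norm_nonneg _).trans (hC 0 (by simp [mem_uDisc]))
  have hr : ∀ N : ℕ, ∀ r : ℝ, 0 < r → r < 1 → ∑ n ∈ Finset.range N, ‖a n * (r:ℂ) ^ n‖ ^ 2 ≤ C ^ 2 := by
    intro N r h0 h1
    refine (bessel_fin (Finset.range N) (fun n => a n * (r:ℂ) ^ n)
      (cont_circle hd.continuousOn h0.le h1) (har r h0 h1)).trans ?_
    calc ∫ θ, ‖f (r * bpt θ)‖ ^ 2 ∂arcM ≤ ∫ θ, C ^ 2 ∂arcM := by
          apply integral_mono_of_nonneg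
          · filter_upwards with θ; positivity
          · exact integrable_const _
          · filter_upwards with θ
            exact pow_le_pow_left₀ (norm_nonneg _) (hC _ (rbpt_mem h0.le h1 θ)) 2
      _ = C ^ 2 := by simp
  have hs : Summable (fun n => ‖a n‖ ^ 2) := by
    apply summable_of_sum_range_le (c := C ^ 2) (fun n => by positivity)
    intro N
    have hlim : Tendsto (fun r : ℝ => ∑ n ∈ Finset.range N, ‖a n * (r:ℂ) ^ n‖ ^ 2)
        (nhdsWithin 1 (Iio 1)) (nhds (∑ n ∈ Finset.range N, ‖a n * ((1:ℝ):ℂ) ^ n‖ ^ 2)) := by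
      apply Tendsto.mono_left _ nhdsWithin_le_nhds
      apply Continuous.tendsto
      apply continuous_finsetSum
      intro n _
      fun_prop
    have := le_of_tendsto hlim (by filter_upwards [ev_lt_one] with r h using hr N r h.1 h.2)
    simpa using this
  obtain ⟨F, hF, hFa, hFn⟩ := riesz_fischer hs
  have hFi : Integrable F arcM := hF.integrable (by norm_num)
  have hct : ∀ w, ‖w‖ < 1 → f w = Ct F w := by
    intro w hw
    refine (ha w hw).unique ?_
    simpa only [hFa] using Ct_hasSum hFi hw
  have hbf : BoundaryFn f F := by
    filter_upwards [fatou hFi] with θ hθ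
    refine (tendsto_congr' ?_).1 hθ
    filter_upwards [ev_lt_one] with r hr
    have hw : ‖(r:ℂ) * bpt θ‖ < 1 := by rw [norm_rbpt hr.1.le]; exact hr.2
    rw [Po_eq_Ct hFi hFn hw, hct _ hw]
  refine ⟨F, hFi, ⟨C, ?_, hC⟩, hFn, hct, hbf⟩
  filter_upwards [hbf] with θ hθ
  refine le_of_tendsto hθ.norm ?_
  filter_upwards [ev_lt_one] with r hr
  exact hC _ (rbpt_mem hr.1.le hr.2 θ)

lemma bdP {f : ℂ → ℂ} (hf : MemHinf f) {F : ℝ → ℂ} (hF : BoundaryFn f F) : BdP f F := by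
  obtain ⟨G, hG⟩ := hinf_bd hf
  have h := bd_unique hG.bf hF
  refine ⟨hG.int.congr h, ?_, fun n hn => ?_, fun w hw => ?_, hF⟩
  · obtain ⟨C, h1, h2⟩ := hG.bd
    refine ⟨C, ?_, h2⟩
    filter_upwards [h1, h] with θ h3 h4
    rwa [← h4]
  · rw [← fc_congr h, hG.neg n hn]
  · rw [hG.ct w hw, ct_congr h]

lemma BdP.po {f : ℂ → ℂ} {F : ℝ → ℂ} (h : BdP f F) {w : ℂ} (hw : ‖w‖ < 1) : f w = Po F w := by
  rw [Po_eq_Ct h.int h.neg hw, h.ct w hw]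

lemma BdP.zero {f : ℂ → ℂ} {F : ℝ → ℂ} (h : BdP f F) : f 0 = fc F 0 := by
  rw [h.ct 0 (by simp), Ct_zero, fc_zero]

lemma ct_bdP {F : ℝ → ℂ} (hF : Integrable F arcM) {K : ℝ} (hK : ∀ᵐ θ ∂arcM, ‖F θ‖ ≤ K)
    (hn : ∀ n : ℤ, n < 0 → fc F n = 0) : MemHinf (Ct F) ∧ BdP (Ct F) F := by
  have hb : ∀ z ∈ uDisc, ‖Ct F z‖ ≤ K := by
    intro z hz
    rw [mem_uDisc] at hz
    rw [← Po_eq_Ct hF hn hz]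
    exact Po_bdd hF hK hz
  refine ⟨⟨Ct_diff hF, K, hb⟩, hF, ⟨K, hK, hb⟩, hn, fun _ _ => rfl, ?_⟩
  filter_upwards [fatou hF] with θ hθ
  refine (tendsto_congr' ?_).1 hθ
  filter_upwards [ev_lt_one] with r hr
  have hw : ‖(r:ℂ) * bpt θ‖ < 1 := by rw [norm_rbpt hr.1.le]; exact hr.2
  rw [Po_eq_Ct hF hn hw]

/-! ## The multipliers -/

lemma mult_one {a : ℝ → ℝ} (ha : Integrable a arcM) (ha0 : ∀ θ, 0 ≤ a θ) {A : ℝ} (hA : 0 < A) :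
    ∃ φ : ℂ → ℂ, DifferentiableOn ℂ φ uDisc ∧ (∀ w, ‖w‖ < 1 → ‖φ w‖ ≤ 1 ∧ ‖1 - φ w‖ ≤ 1 ∧
      ‖φ w‖ * ‖2 * Ct (fun θ => (a θ : ℂ)) w - ((∫ θ, a θ ∂arcM : ℝ) : ℂ)‖ = A * ‖1 - φ w‖) ∧
      ∀ r : ℝ, 0 < r → r < 1 → ∫ θ, ‖1 - φ (r * bpt θ)‖ ^ 2 ∂arcM ≤ (∫ θ, a θ ∂arcM) / A := by
  set m := ∫ θ, a θ ∂arcM with hm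
  have hm0 : 0 ≤ m := integral_nonneg ha0
  have haC : Integrable (fun θ => (a θ : ℂ)) arcM := ha.ofReal
  set W : ℂ → ℂ := fun w => 2 * Ct (fun θ => (a θ : ℂ)) w - (m : ℂ) with hW
  have hWre : ∀ w, ‖w‖ < 1 → 0 ≤ (W w).re := by
    intro w hw
    have h1 := Po_eq haC hw
    have h2 : Po (fun θ => (a θ : ℂ)) w = ((∫ θ, a θ * pk w θ ∂arcM : ℝ) : ℂ) := by
      unfold Po
      rw [← integral_complex_ofReal]; congr 1; ext θ; push_cast; rfl
    rw [h2] at h1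
    simp only [Complex.conj_ofReal] at h1
    have h3 := congrArg Complex.re h1
    rw [integral_complex_ofReal, Complex.sub_re, Complex.add_re, Complex.conj_re, Complex.ofReal_re,
      Complex.ofReal_re] at h3
    have h4 : (W w).re = 2 * (Ct (fun θ => (a θ : ℂ)) w).re - m := by
      rw [hW]; simp
    have h5 : 0 ≤ ∫ θ, a θ * pk w θ ∂arcM :=
      integral_nonneg (fun θ => mul_nonneg (ha0 θ) (pk_nonneg hw θ))
    rw [h4]; linarith
  have hW0 : W 0 = m := by
    rw [hW]; simp only [Ct_zero]; rw [integral_complex_ofReal]; ring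
  have hWd : DifferentiableOn ℂ W uDisc := ((Ct_diff haC).const_mul 2).sub_const _
  have hne : ∀ w, ‖w‖ < 1 → (A : ℂ) + W w ≠ 0 := by
    intro w hw h
    have := congrArg Complex.re h
    rw [Complex.add_re, Complex.ofReal_re, Complex.zero_re] at this
    linarith [hWre w hw]
  have hnp : ∀ w, ‖w‖ < 1 → 0 < ‖(A : ℂ) + W w‖ := fun w hw => norm_pos_iff.2 (hne w hw)
  set φ : ℂ → ℂ := fun w => A / (A + W w) with hφ
  have h1φ : ∀ w, ‖w‖ < 1 → 1 - φ w = W w / (A + W w) := by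
    intro w hw
    have := hne w hw
    rw [hφ]; field_simp; ring
  have hnsq : ∀ w, ‖(A:ℂ) + W w‖ ^ 2 = A ^ 2 + 2 * A * (W w).re + ‖W w‖ ^ 2 := by
    intro w
    rw [← Complex.normSq_eq_norm_sq, ← Complex.normSq_eq_norm_sq, Complex.normSq_apply,
      Complex.normSq_apply]
    simp; ring
  have hle1 : ∀ w, ‖w‖ < 1 → A ≤ ‖(A:ℂ) + W w‖ := by
    intro w hw
    apply le_of_sq_le_sq _ (norm_nonneg _) |> fun h => h
    rw [hnsq]
    nlinarith [hWre w hw, sq_nonneg ‖W w‖, mul_nonneg hA.le (hWre w hw)]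
  have hle2 : ∀ w, ‖w‖ < 1 → ‖W w‖ ≤ ‖(A:ℂ) + W w‖ := by
    intro w hw
    apply le_of_sq_le_sq _ (norm_nonneg _) |> fun h => h
    rw [hnsq]
    nlinarith [hWre w hw, sq_nonneg A, mul_nonneg hA.le (hWre w hw)]
  have hφd : DifferentiableOn ℂ φ uDisc :=
    (differentiableOn_const _).div (hWd.const_add _) (fun w hw => hne w (mem_uDisc.1 hw))
  refine ⟨φ, hφd, fun w hw => ⟨?_, ?_, ?_⟩, fun r h0 h1 => ?_⟩
  · rw [hφ]; simp only [norm_div]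
    rw [div_le_one (hnp w hw)]; simpa [abs_of_pos hA] using hle1 w hw
  · rw [h1φ w hw, norm_div, div_le_one (hnp w hw)]; exact hle2 w hw
  · rw [h1φ w hw, hφ]; simp only [norm_div]
    rw [Complex.norm_real, Real.norm_of_nonneg hA.le]
    show A / _ * ‖W w‖ = _
    ring
  · have hd1 : DifferentiableOn ℂ (fun w => 1 - φ w) uDisc := hφd.const_sub 1
    have hc := cont_circle hd1.continuousOn h0.le h1
    have hmv := mean_value hd1 h0.le h1
    have hre : ∫ θ, (1 - φ (r * bpt θ)).re ∂arcM = (1 - φ 0).re := by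
      rw [← hmv]
      exact integral_re (𝕜 := ℂ) (integrable_cont hc)
    calc ∫ θ, ‖1 - φ (r * bpt θ)‖ ^ 2 ∂arcM ≤ ∫ θ, (1 - φ (r * bpt θ)).re ∂arcM := by
          apply integral_mono (integrable_cont (by fun_prop))
            (integrable_cont (Complex.continuous_re.comp hc))
          intro θ
          have hw : ‖(r:ℂ) * bpt θ‖ < 1 := by rw [norm_rbpt h0.le]; exact h1
          show ‖1 - φ (r * bpt θ)‖ ^ 2 ≤ (1 - φ (r * bpt θ)).re
          rw [h1φ _ hw]
          set w := (r:ℂ) * bpt θ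
          have e : (W w / (A + W w)).re = (A * (W w).re + ‖W w‖ ^ 2) / ‖(A:ℂ) + W w‖ ^ 2 := by
            rw [Complex.div_re, ← add_div, Complex.normSq_eq_norm_sq,
              ← Complex.normSq_eq_norm_sq (W w), Complex.normSq_apply]
            simp; ring
          rw [e, norm_div, div_pow]
          apply div_le_div_of_nonneg_right _ (by positivity)
          nlinarith [mul_nonneg hA.le (hWre w hw)]
      _ = (1 - φ 0).re := hre
      _ = m / (A + m) := by
          rw [h1φ 0 (by simp), hW0, ← Complex.ofReal_add, ← Complex.ofReal_div, Complex.ofReal_re]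
      _ ≤ m / A := div_le_div_of_nonneg_left hm0 hA (by linarith)

lemma norm_one_sub_prod' {ι : Type*} (s : Finset ι) (x : ι → ℂ) (hx : ∀ i, ‖x i‖ ≤ 1) :
    ‖1 - ∏ i ∈ s, x i‖ ≤ ∑ i ∈ s, ‖1 - x i‖ := by
  classical
  induction s using Finset.induction_on with
  | empty => simp
  | insert i s hi ih =>
    rw [Finset.prod_insert hi, Finset.sum_insert hi]
    calc ‖1 - x i * ∏ j ∈ s, x j‖ = ‖(1 - x i) + x i * (1 - ∏ j ∈ s, x j)‖ := by congr 1; ring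
      _ ≤ ‖1 - x i‖ + ‖x i‖ * ‖1 - ∏ j ∈ s, x j‖ := by
        rw [← norm_mul]; exact norm_add_le _ _
      _ ≤ _ := by nlinarith [hx i, norm_nonneg (1 - ∏ j ∈ s, x j)]

lemma norm_prod_le_one' {ι : Type*} (s : Finset ι) (x : ι → ℂ) (hx : ∀ i, ‖x i‖ ≤ 1) :
    ‖∏ i ∈ s, x i‖ ≤ 1 := by
  rw [norm_prod]
  exact Finset.prod_le_one (fun i _ => norm_nonneg _) (fun i _ => hx i)

lemma norm_prod_le_single {ι : Type*} (s : Finset ι) (x : ι → ℂ) (hx : ∀ i, ‖x i‖ ≤ 1) {i : ι}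
    (hi : i ∈ s) : ‖∏ i ∈ s, x i‖ ≤ ‖x i‖ := by
  classical
  rw [← Finset.mul_prod_erase s x hi, norm_mul]
  exact mul_le_of_le_one_right (norm_nonneg _) (norm_prod_le_one' _ x hx)

lemma sub_conj_le (z : ℂ) : ‖z - (starRingEnd ℂ) z‖ ≤ 2 * (‖z‖ * ‖1 - z‖) := by
  have : z - (starRingEnd ℂ) z = z * (starRingEnd ℂ) (1 - z) - (starRingEnd ℂ) z * (1 - z) := by
    rw [map_sub, map_one]; ring
  rw [this]
  refine (norm_sub_le _ _).trans ?_
  rw [norm_mul, norm_mul, Complex.norm_conj, Complex.norm_conj]; linarith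

/-- decomposition of an integrable function in four nonnegative ones -/
lemma four_decomp (k : ℝ → ℂ) (hk : Integrable k arcM) : ∃ (a : Fin 4 → ℝ → ℝ) (e : Fin 4 → ℂ),
    (∀ j, ‖e j‖ = 1) ∧ (∀ j, Integrable (a j) arcM) ∧ (∀ j θ, 0 ≤ a j θ) ∧
    (∀ j θ, a j θ ≤ ‖k θ‖) ∧ ∀ θ, k θ = ∑ j, e j * (a j θ : ℂ) := by
  have hre : Integrable (fun θ => (k θ).re) arcM := hk.re
  have him : Integrable (fun θ => (k θ).im) arcM := hk.im
  refine ⟨![fun θ => max (k θ).re 0, fun θ => max (-(k θ).re) 0, fun θ => max (k θ).im 0,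
    fun θ => max (-(k θ).im) 0], ![1, -1, I, -I], ?_, ?_, ?_, ?_, ?_⟩
  · intro j; fin_cases j <;> simp
  · intro j; fin_cases j
    · exact hre.pos_part
    · exact hre.neg_part
    · exact him.pos_part
    · exact him.neg_part
  · intro j θ; fin_cases j <;> simp
  · intro j θ
    have h1 := Complex.abs_re_le_norm (k θ)
    have h2 := Complex.abs_im_le_norm (k θ)
    fin_cases j
    · exact max_le ((le_abs_self _).trans h1) (norm_nonneg _)
    · exact max_le ((neg_le_abs _).trans h1) (norm_nonneg _)
    · exact max_le ((le_abs_self _).trans h2) (norm_nonneg _)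
    · exact max_le ((neg_le_abs _).trans h2) (norm_nonneg _)
  · intro θ
    have h : ∀ x : ℝ, x = max x 0 - max (-x) 0 := by
      intro x
      rcases le_total 0 x with hx | hx
      · rw [max_eq_left hx, max_eq_right (by linarith)]; ring
      · rw [max_eq_right hx, max_eq_left (by linarith)]; ring
    simp only [Fin.sum_univ_four]
    apply Complex.ext
    · simp; linarith [h (k θ).re]
    · simp; linarith [h (k θ).im]

lemma trig_bounds (c : ℤ →₀ ℂ) : ∃ B : ℝ, 0 ≤ B ∧ ∀ w, ‖w‖ < 1 → ‖Po (trig c) w‖ ≤ B ∧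
    ‖Ct (fun θ => (starRingEnd ℂ) (trig c θ)) w‖ ≤ B := by
  refine ⟨∑ n ∈ c.support, ‖c n‖, Finset.sum_nonneg (fun _ _ => norm_nonneg _), fun w hw => ⟨?_, ?_⟩⟩
  · have : trig c = fun θ => ∑ n ∈ c.support, c n * bpt θ ^ n := rfl
    rw [this, Po_finsum _ (fun n => c n) (fun n θ => bpt θ ^ n) (fun n => int_zpow' n) hw]
    refine (norm_sum_le _ _).trans (Finset.sum_le_sum fun n _ => ?_)
    rw [norm_mul, Po_zpow n hw]
    apply mul_le_of_le_one_right (norm_nonneg _)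
    split_ifs
    · rw [norm_pow]; exact pow_le_one₀ (norm_nonneg _) hw.le
    · rw [norm_pow, Complex.norm_conj]; exact pow_le_one₀ (norm_nonneg _) hw.le
  · have : (fun θ => (starRingEnd ℂ) (trig c θ)) =
        fun θ => ∑ n ∈ c.support, (starRingEnd ℂ) (c n) * bpt θ ^ (-n) := by
      funext θ
      show (starRingEnd ℂ) (∑ n ∈ c.support, c n * bpt θ ^ n) = _
      rw [map_sum]
      apply Finset.sum_congr rfl
      intro n _
      rw [map_mul, map_zpow₀, conj_bpt, inv_zpow']
    rw [this, Ct_finsum _ (fun n => (starRingEnd ℂ) (c n)) (fun n θ => bpt θ ^ (-n)) (fun n => int_zpow' _) hw]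
    refine (norm_sum_le _ _).trans (Finset.sum_le_sum fun n _ => ?_)
    rw [norm_mul, Complex.norm_conj, Ct_zpow _ hw]
    apply mul_le_of_le_one_right (norm_nonneg _)
    split_ifs
    · rw [norm_pow]; exact pow_le_one₀ (norm_nonneg _) hw.le
    · simp

lemma mult_exists {k : ℝ → ℂ} (hk : Integrable k arcM) {ε : ℝ} (hε : 0 < ε) :
    ∃ (φ : ℂ → ℂ) (K : ℝ), DifferentiableOn ℂ φ uDisc ∧ 0 ≤ K ∧
      (∀ w, ‖w‖ < 1 → ‖φ w‖ ≤ 1 ∧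
        ‖φ w‖ * ‖Ct (fun θ => (starRingEnd ℂ) (k θ)) w‖ ≤ K) ∧
      ∀ r : ℝ, 0 < r → r < 1 →
        ∫ θ, ‖1 - φ (r * bpt θ)‖ * ‖Po k (r * bpt θ)‖ ∂arcM ≤ 32 * ε ∧
        ∫ θ, ‖φ (r * bpt θ) - (starRingEnd ℂ) (φ (r * bpt θ))‖ *
          ‖Ct (fun θ => (starRingEnd ℂ) (k θ)) (r * bpt θ)‖ ∂arcM ≤ 32 * ε := by
  obtain ⟨c, hc⟩ := trig_dense hk hε
  obtain ⟨B, hB0, hB⟩ := trig_bounds c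
  set k2 : ℝ → ℂ := fun θ => k θ - trig c θ with hk2
  have hk2i : Integrable k2 arcM := hk.sub (trig_int c)
  obtain ⟨a, e, he, hai, ha0, hak, hdec⟩ := four_decomp k2 hk2i
  set D := 2 * B + 2 * ε + 1 with hD
  have hD0 : 0 < D := by positivity
  set η := ε / D with hη
  have hη0 : 0 < η := by positivity
  set A := ε / η ^ 2 with hA
  have hA0 : 0 < A := by positivity
  set m : Fin 4 → ℝ := fun j => ∫ θ, a j θ ∂arcM with hm
  have hm0 : ∀ j, 0 ≤ m j := fun j => integral_nonneg (ha0 j)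
  have hmε : ∀ j, m j ≤ ε := by
    intro j
    refine le_trans ?_ hc.le
    exact integral_mono (hai j) hk2i.norm (hak j)
  choose φ hφd hφ hφr using fun j => mult_one (hai j) (ha0 j) hA0
  set W : Fin 4 → ℂ → ℂ := fun j w => 2 * Ct (fun θ => (a j θ : ℂ)) w - (m j : ℂ) with hW
  set Φ : ℂ → ℂ := fun w => ∏ j, φ j w with hΦ
  have hΦd : DifferentiableOn ℂ Φ uDisc := by
    apply DifferentiableOn.fun_finsetProd
    intro j _; exact hφd j
  have hφ1 : ∀ w, ‖w‖ < 1 → ∀ j, ‖φ j w‖ ≤ 1 := fun w hw j => (hφ j w hw).1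
  have hy : ∀ w, ‖w‖ < 1 → ‖1 - Φ w‖ ≤ ∑ j, ‖1 - φ j w‖ := fun w hw =>
    norm_one_sub_prod' _ _ (hφ1 w hw)
  have hΦ1 : ∀ w, ‖w‖ < 1 → ‖Φ w‖ ≤ 1 := fun w hw => norm_prod_le_one' _ _ (hφ1 w hw)
  have hΦW : ∀ w, ‖w‖ < 1 → ∀ j, ‖Φ w‖ * ‖W j w‖ ≤ A * ‖1 - φ j w‖ := by
    intro w hw j
    rw [← (hφ j w hw).2.2]
    exact mul_le_mul_of_nonneg_right (norm_prod_le_single _ _ (hφ1 w hw) (Finset.mem_univ j))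
      (norm_nonneg _)
  have hCt : ∀ w, ‖w‖ < 1 → ‖Ct (fun θ => (starRingEnd ℂ) (k θ)) w‖ ≤ D + ∑ j, ‖W j w‖ / 2 := by
    intro w hw
    have e1 : (fun θ => (starRingEnd ℂ) (k θ)) = fun θ => (starRingEnd ℂ) (trig c θ) +
        ∑ j, (starRingEnd ℂ) (e j) * (a j θ : ℂ) := by
      funext θ
      have : k θ = trig c θ + k2 θ := by rw [hk2]; ring
      rw [this, hdec, map_add, map_sum]
      congr 1
      apply Finset.sum_congr rfl
      intro j _
      rw [map_mul, Complex.conj_ofReal]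
    have hai' : ∀ j, Integrable (fun θ => (a j θ : ℂ)) arcM := fun j => (hai j).ofReal
    rw [e1, Ct_add (integrable_conj (trig_int c))
      (integrable_finsetSum _ (fun j _ => (hai' j).const_mul _)) hw,
      Ct_finsum _ (fun j => (starRingEnd ℂ) (e j)) (fun j θ => (a j θ : ℂ)) hai' hw]
    have h2 : ∀ j, ‖(starRingEnd ℂ) (e j) * Ct (fun θ => (a j θ : ℂ)) w‖ ≤ ‖W j w‖ / 2 + ε / 2 := by
      intro j
      rw [norm_mul, Complex.norm_conj, he, one_mul]
      have : Ct (fun θ => (a j θ : ℂ)) w = W j w / 2 + (m j : ℂ) / 2 := by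
        rw [hW]; ring
      rw [this]
      refine (norm_add_le _ _).trans ?_
      rw [norm_div, norm_div, Complex.norm_real, Real.norm_of_nonneg (hm0 j)]
      simp only [Complex.norm_ofNat]
      linarith [hmε j]
    calc _ ≤ ‖Ct (fun θ => (starRingEnd ℂ) (trig c θ)) w‖ +
        ∑ j, ‖(starRingEnd ℂ) (e j) * Ct (fun θ => (a j θ : ℂ)) w‖ :=
          (norm_add_le _ _).trans (add_le_add_right (norm_sum_le _ _) _)
      _ ≤ B + ∑ j, (‖W j w‖ / 2 + ε / 2) :=
          add_le_add (hB w hw).2 (Finset.sum_le_sum fun j _ => h2 j)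
      _ ≤ _ := by
          rw [Finset.sum_add_distrib]
          simp only [Finset.sum_const, Finset.card_univ, Fintype.card_fin, nsmul_eq_mul]
          rw [hD]; push_cast; linarith
  have hsumW : ∀ w, ‖w‖ < 1 → ‖Φ w‖ * ∑ j, ‖W j w‖ / 2 ≤ A / 2 * ∑ j, ‖1 - φ j w‖ := by
    intro w hw
    rw [Finset.mul_sum, Finset.mul_sum]
    apply Finset.sum_le_sum
    intro j _
    linarith [hΦW w hw j]
  refine ⟨Φ, D + 2 * A, hΦd, by positivity, fun w hw => ⟨hΦ1 w hw, ?_⟩, fun r h0 h1 => ?_⟩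
  · have h1 := mul_le_mul_of_nonneg_left (hCt w hw) (norm_nonneg (Φ w))
    have h2 := hsumW w hw
    have h3 : ∑ j, ‖1 - φ j w‖ ≤ 4 := by
      calc ∑ j, ‖1 - φ j w‖ ≤ ∑ j : Fin 4, (1:ℝ) := Finset.sum_le_sum fun j _ => (hφ j w hw).2.1
        _ = 4 := by simp
    nlinarith [hΦ1 w hw]
  · have hw : ∀ θ, ‖(r:ℂ) * bpt θ‖ < 1 := fun θ => by rw [norm_rbpt h0.le]; exact h1
    have hcφ : ∀ j, Continuous (fun θ => φ j (r * bpt θ)) := fun j =>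
      cont_circle (hφd j).continuousOn h0.le h1
    have hcΦ : Continuous (fun θ => Φ (r * bpt θ)) := cont_circle hΦd.continuousOn h0.le h1
    have hcP := Po_cont_circle hk h0.le h1
    have hcP2 := Po_cont_circle hk2i h0.le h1
    have hcC : Continuous (fun θ => Ct (fun θ => (starRingEnd ℂ) (k θ)) (r * bpt θ)) :=
      cont_circle (Ct_diff (integrable_conj hk)).continuousOn h0.le h1
    have c1 : Continuous (fun θ => ‖1 - Φ (r * bpt θ)‖) := (continuous_const.sub hcΦ).norm
    have cj : ∀ j, Continuous (fun θ => ‖1 - φ j (r * bpt θ)‖) := fun j =>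
      (continuous_const.sub (hcφ j)).norm
    have cS : Continuous (fun θ => ∑ j, ‖1 - φ j (r * bpt θ)‖ ^ 2) :=
      continuous_finsetSum _ fun j _ => (cj j).pow 2
    have hsq : ∀ j, ∫ θ, ‖1 - φ j (r * bpt θ)‖ ^ 2 ∂arcM ≤ η ^ 2 := by
      intro j
      refine (hφr j r h0 h1).trans ?_
      rw [div_le_iff₀ hA0, hA]
      have : η ^ 2 * (ε / η ^ 2) = ε := by field_simp
      rw [this]; exact hmε j
    have hlin : ∀ j, ∫ θ, ‖1 - φ j (r * bpt θ)‖ ∂arcM ≤ 2 * η := by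
      intro j
      have := hcφ j
      calc ∫ θ, ‖1 - φ j (r * bpt θ)‖ ∂arcM
          ≤ ∫ θ, (η + η⁻¹ * ‖1 - φ j (r * bpt θ)‖ ^ 2) ∂arcM := by
            apply integral_mono (integrable_cont (cj j)) (integrable_cont (by exact continuous_const.add (continuous_const.mul ((cj j).pow 2))))
            intro θ
            simp only
            set y := ‖1 - φ j (r * bpt θ)‖
            have : η⁻¹ * (η * (η + η⁻¹ * y ^ 2 - y)) = η + η⁻¹ * y ^ 2 - y := by field_simp
            have h3 : η * (η + η⁻¹ * y ^ 2 - y) = η ^ 2 + y ^ 2 - η * y := by field_simp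
            have h4 : 0 ≤ η ^ 2 + y ^ 2 - η * y := by nlinarith [sq_nonneg (η - y), sq_nonneg η, sq_nonneg y]
            have : 0 ≤ η + η⁻¹ * y ^ 2 - y := by
              rw [← this, h3]; positivity
            linarith
        _ = η + η⁻¹ * ∫ θ, ‖1 - φ j (r * bpt θ)‖ ^ 2 ∂arcM := by
            rw [integral_add (integrable_const _) (integrable_cont (by exact continuous_const.mul ((cj j).pow 2))), integral_const_mul]
            simp
        _ ≤ η + η⁻¹ * η ^ 2 := by gcongr; exact hsq j
        _ = 2 * η := by field_simp; ring
    have hΦlin : ∫ θ, ‖1 - Φ (r * bpt θ)‖ ∂arcM ≤ 8 * η := by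
      calc ∫ θ, ‖1 - Φ (r * bpt θ)‖ ∂arcM ≤ ∫ θ, ∑ j, ‖1 - φ j (r * bpt θ)‖ ∂arcM := by
            apply integral_mono (integrable_cont c1)
              (integrable_cont (by exact continuous_finsetSum _ fun j _ => cj j))
            intro θ; exact hy _ (hw θ)
        _ = ∑ j, ∫ θ, ‖1 - φ j (r * bpt θ)‖ ∂arcM :=
            integral_finsetSum _ (fun j _ => integrable_cont (cj j))
        _ ≤ ∑ j : Fin 4, 2 * η := Finset.sum_le_sum fun j _ => hlin j
        _ = 8 * η := by simp; ring
    have hDη : D * η = ε := by rw [hη]; field_simp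
    have hBD : B ≤ D := by rw [hD]; linarith
    constructor
    · calc ∫ θ, ‖1 - Φ (r * bpt θ)‖ * ‖Po k (r * bpt θ)‖ ∂arcM
          ≤ ∫ θ, (D * ‖1 - Φ (r * bpt θ)‖ + 2 * ‖Po k2 (r * bpt θ)‖) ∂arcM := by
            apply integral_mono (integrable_cont (by exact c1.mul hcP.norm)) (integrable_cont (by exact (continuous_const.mul c1).add (continuous_const.mul hcP2.norm)))
            intro θ
            simp only
            have e1 : Po k (r * bpt θ) = Po (trig c) (r * bpt θ) + Po k2 (r * bpt θ) := by
              rw [hk2, Po_sub hk (trig_int c) (hw θ)]; ring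
            have e2 : ‖Po k (r * bpt θ)‖ ≤ D + ‖Po k2 (r * bpt θ)‖ := by
              rw [e1]; refine (norm_add_le _ _).trans ?_
              linarith [(hB _ (hw θ)).1]
            have e3 : ‖1 - Φ (r * bpt θ)‖ ≤ 2 := by
              refine (norm_sub_le _ _).trans ?_
              rw [norm_one]; linarith [hΦ1 _ (hw θ)]
            have e4 := mul_le_mul_of_nonneg_left e2 (norm_nonneg (1 - Φ (r * bpt θ)))
            nlinarith [norm_nonneg (Po k2 (r * bpt θ))]
        _ = D * ∫ θ, ‖1 - Φ (r * bpt θ)‖ ∂arcM + 2 * ∫ θ, ‖Po k2 (r * bpt θ)‖ ∂arcM := by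
            rw [integral_add (integrable_cont (by exact continuous_const.mul c1)) (integrable_cont (by exact continuous_const.mul hcP2.norm)),
              integral_const_mul, integral_const_mul]
        _ ≤ D * (8 * η) + 2 * ε := by
            gcongr
            exact (Po_L1 hk2i h0.le h1).trans hc.le
        _ ≤ 32 * ε := by linarith
    · calc ∫ θ, ‖Φ (r * bpt θ) - (starRingEnd ℂ) (Φ (r * bpt θ))‖ *
          ‖Ct (fun θ => (starRingEnd ℂ) (k θ)) (r * bpt θ)‖ ∂arcM
          ≤ ∫ θ, (2 * D * ‖1 - Φ (r * bpt θ)‖ + 4 * A * ∑ j, ‖1 - φ j (r * bpt θ)‖ ^ 2) ∂arcM := by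
            have hcc : Continuous (fun θ => (starRingEnd ℂ) (Φ (r * bpt θ))) :=
              Complex.continuous_conj.comp hcΦ
            apply integral_mono (integrable_cont (by exact (hcΦ.sub hcc).norm.mul hcC.norm)) (integrable_cont (by exact (continuous_const.mul c1).add (continuous_const.mul cS)))
            intro θ
            simp only
            set w := (r:ℂ) * bpt θ
            have hww : ‖w‖ < 1 := hw θ
            have f1 := sub_conj_le (Φ w)
            have f2 := hCt w hww
            have f3 := hsumW w hww
            have f4 := hy w hww
            have f5 : (∑ j, ‖1 - φ j w‖) ^ 2 ≤ 4 * ∑ j, ‖1 - φ j w‖ ^ 2 := by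
              have := sq_sum_le_card_mul_sum_sq (s := (Finset.univ : Finset (Fin 4))) (f := fun j => ‖1 - φ j w‖)
              simpa using this
            set Y := ∑ j, ‖1 - φ j w‖
            set S := ∑ j, ‖W j w‖ / 2
            have hY0 : 0 ≤ Y := (norm_nonneg _).trans f4
            have hS0 : 0 ≤ S := Finset.sum_nonneg fun j _ => by positivity
            have n1 := norm_nonneg (1 - Φ w)
            have n2 := norm_nonneg (Φ w)
            calc ‖Φ w - (starRingEnd ℂ) (Φ w)‖ * ‖Ct (fun θ => (starRingEnd ℂ) (k θ)) w‖
                ≤ (2 * (‖Φ w‖ * ‖1 - Φ w‖)) * (D + S) :=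
                  mul_le_mul f1 f2 (norm_nonneg _) (by positivity)
              _ = 2 * D * (‖Φ w‖ * ‖1 - Φ w‖) + 2 * ‖1 - Φ w‖ * (‖Φ w‖ * S) := by ring
              _ ≤ 2 * D * (1 * ‖1 - Φ w‖) + 2 * Y * (A / 2 * Y) := by
                  gcongr
                  exact hΦ1 w hww
              _ = 2 * D * ‖1 - Φ w‖ + A * Y ^ 2 := by ring
              _ ≤ 2 * D * ‖1 - Φ w‖ + A * (4 * ∑ j, ‖1 - φ j w‖ ^ 2) := by gcongr
              _ = _ := by ring
        _ = 2 * D * ∫ θ, ‖1 - Φ (r * bpt θ)‖ ∂arcM +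
            4 * A * ∑ j, ∫ θ, ‖1 - φ j (r * bpt θ)‖ ^ 2 ∂arcM := by
            rw [integral_add (integrable_cont (by exact continuous_const.mul c1)) (integrable_cont (by exact continuous_const.mul cS)),
              integral_const_mul, integral_const_mul,
              integral_finsetSum _ (fun j _ => integrable_cont (by exact (cj j).pow 2))]
        _ ≤ 2 * D * (8 * η) + 4 * A * ∑ j : Fin 4, η ^ 2 := by
            gcongr with j
            exact hsq j
        _ = 32 * ε := by
            have : A * η ^ 2 = ε := by rw [hA]; field_simp
            simp only [Finset.sum_const, Finset.card_univ, Fintype.card_fin, nsmul_eq_mul]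
            push_cast; linarith

/-! ## Annihilators of invariant subspaces -/

lemma bShift_bd {g : ℂ → ℂ} {G : ℝ → ℂ} (hG : BoundaryFn g G) :
    BoundaryFn (bShift g) (fun θ => (G θ - g 0) * (bpt θ)⁻¹) := by
  filter_upwards [hG] with θ hθ
  have h1 : Tendsto (fun r : ℝ => (g (r * bpt θ) - g 0) / (r * bpt θ)) (nhdsWithin 1 (Iio 1))
      (nhds ((G θ - g 0) / (((1:ℝ):ℂ) * bpt θ))) := by
    apply Tendsto.div (hθ.sub_const _)
    · apply Tendsto.mono_left _ nhdsWithin_le_nhds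
      exact Continuous.tendsto (by fun_prop) 1
    · simpa using bpt_ne_zero θ
  rw [Complex.ofReal_one, one_mul, div_eq_mul_inv] at h1
  refine (tendsto_congr' ?_).1 h1
  filter_upwards [ev_lt_one] with r hr
  unfold bShift
  rw [if_neg]
  exact mul_ne_zero (by exact_mod_cast hr.1.ne') (bpt_ne_zero θ)

lemma int_mul_bdd {F k : ℝ → ℂ} {f : ℂ → ℂ} (hF : BdP f F) (hk : Integrable k arcM) :
    Integrable (fun θ => F θ * k θ) arcM := by
  obtain ⟨C, h1, _⟩ := hF.bd
  exact hk.bdd_mul hF.int.aestronglyMeasurable h1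

/-- `k` annihilates `M` -/
def Ann (M : Set (ℂ → ℂ)) (k : ℝ → ℂ) : Prop :=
  ∀ g ∈ M, ∀ G, BoundaryFn g G → ∫ θ, G θ * k θ ∂arcM = 0

lemma fc_shift_const {G : ℝ → ℂ} (hG : Integrable G arcM) (c : ℂ) {j : ℤ} (hj : j + 1 ≠ 0) :
    fc (fun θ => (G θ - c) * (bpt θ)⁻¹) j = fc G (j + 1) := by
  unfold fc
  have : ∀ θ, (G θ - c) * (bpt θ)⁻¹ * bpt θ ^ (-j) =
      G θ * bpt θ ^ (-(j + 1)) - c * bpt θ ^ (-(j + 1)) := by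
    intro θ
    rw [show -(j+1) = -1 + -j by ring, zpow_add₀ (bpt_ne_zero θ), zpow_neg_one]; ring
  simp only [this]
  rw [integral_sub (int_zpow hG _) ((int_zpow' _).const_mul _), integral_const_mul, integral_bzpow,
    if_neg (by omega)]
  simp

lemma ann_fc {M : Set (ℂ → ℂ)} (hsub : ∀ f ∈ M, MemHinf f) (hinv : ∀ f ∈ M, bShift f ∈ M)
    {k : ℝ → ℂ} (hk : Integrable k arcM) (hann : Ann M k) (n : ℕ) : ∀ g ∈ M, ∀ G, BoundaryFn g G →
    fc (fun θ => G θ * k θ) n = ∑ j ∈ Finset.range n, fc G j * fc k (n - j) := by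
  induction n with
  | zero =>
    intro g hg G hG
    have := hann g hg G hG
    simp [fc_zero, this]
  | succ n ih =>
    intro g hg G hG
    have hb := bdP (hsub g hg) hG
    have h1 := ih _ (hinv g hg) _ (bShift_bd hG)
    have h2 : fc (fun θ => (G θ - g 0) * (bpt θ)⁻¹ * k θ) n =
        fc (fun θ => G θ * k θ) (n + 1) - g 0 * fc k (n + 1) := by
      unfold fc
      rw [← integral_const_mul, ← integral_sub (int_zpow (int_mul_bdd hb hk) _)
        ((int_zpow hk _).const_mul _)]
      congr 1; ext θ
      rw [show -((n:ℤ)+1) = -1 + -n by ring, zpow_add₀ (bpt_ne_zero θ), zpow_neg_one]; ring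
    rw [h2] at h1
    rw [Finset.sum_range_succ']
    have h3 : ∀ j ∈ Finset.range n, fc (fun θ => (G θ - g 0) * (bpt θ)⁻¹) j * fc k (n - j) =
        fc G ((j + 1 : ℕ) : ℤ) * fc k (((n + 1 : ℕ) : ℤ) - ((j + 1 : ℕ) : ℤ)) := by
      intro j _
      rw [fc_shift_const hb.int _ (by omega)]
      push_cast
      congr 2; ring
    rw [Finset.sum_congr rfl h3] at h1
    rw [hb.zero] at h1
    push_cast at h1 ⊢
    rw [sub_zero]
    linear_combination h1

lemma ann_ct {M : Set (ℂ → ℂ)} (hsub : ∀ f ∈ M, MemHinf f) (hinv : ∀ f ∈ M, bShift f ∈ M)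
    {k : ℝ → ℂ} (hk : Integrable k arcM) (hann : Ann M k) {g : ℂ → ℂ} (hg : g ∈ M) {G : ℝ → ℂ}
    (hG : BoundaryFn g G) {w : ℂ} (hw : ‖w‖ < 1) :
    Ct (fun θ => G θ * k θ) w = g w * (Ct k w - ∫ θ, k θ ∂arcM) := by
  have hb := bdP (hsub g hg) hG
  have s1 := Ct_hasSum hb.int hw
  have s2 : HasSum (fun n : ℕ => (if n = 0 then 0 else fc k n) * w ^ n) (Ct k w - ∫ θ, k θ ∂arcM) := by
    have h1 := (Ct_hasSum hk hw).sub (hasSum_ite_eq 0 (∫ θ, k θ ∂arcM))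
    have e : (fun n : ℕ => (if n = 0 then 0 else fc k n) * w ^ n) =
        fun b : ℕ => fc k b * w ^ b - if b = 0 then ∫ θ, k θ ∂arcM else 0 := by
      funext n
      by_cases hn : n = 0
      · simp [hn, fc_zero]
      · simp [hn]
    rw [e]; exact h1
  rw [hb.ct w hw, ← s1.tsum_eq, ← s2.tsum_eq,
    tsum_mul_tsum_eq_tsum_sum_range_of_summable_norm s1.summable.norm s2.summable.norm,
    ← (Ct_hasSum (int_mul_bdd hb hk) hw).tsum_eq]
  congr 1; funext n
  rw [ann_fc hsub hinv hk hann n g hg G hG, Finset.sum_range_succ, Finset.sum_mul]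
  simp only [Nat.sub_self, if_true, zero_mul, mul_zero, add_zero]
  apply Finset.sum_congr rfl
  intro j hj
  rw [Finset.mem_range] at hj
  rw [if_neg (by omega), Nat.cast_sub hj.le]
  have : w ^ n = w ^ j * w ^ (n - j) := by rw [← pow_add]; congr 1; omega
  rw [this]; ring

lemma L1prod {f : ℂ → ℂ} {F k : ℝ → ℂ} (hd : AnalyticOnDisc f) (hF : BdP f F) (hk : Integrable k arcM) :
    Tendsto (fun r : ℝ => ∫ θ, ‖f (r * bpt θ) * Po k (r * bpt θ) - F θ * k θ‖ ∂arcM)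
      (nhdsWithin 1 (Iio 1)) (nhds 0) := by
  obtain ⟨C, hC1, hC2⟩ := hF.bd
  have hC0 : 0 ≤ C := (norm_nonneg _).trans (hC2 0 (by simp [mem_uDisc]))
  have t1 : Tendsto (fun r : ℝ => ∫ θ, ‖(f (r * bpt θ) - F θ) * k θ‖ ∂arcM)
      (nhdsWithin 1 (Iio 1)) (nhds (∫ θ, (0:ℝ) ∂arcM)) := by
    apply tendsto_integral_filter_of_dominated_convergence (fun θ => 2 * C * ‖k θ‖)
    · filter_upwards [ev_lt_one] with r hr
      exact ((((cont_circle hd.continuousOn hr.1.le hr.2).aestronglyMeasurable).sub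
        hF.int.aestronglyMeasurable).mul hk.aestronglyMeasurable).norm
    · filter_upwards [ev_lt_one] with r hr
      filter_upwards [hC1] with θ hθ
      rw [norm_norm, norm_mul]
      apply mul_le_mul_of_nonneg_right _ (norm_nonneg _)
      refine (norm_sub_le _ _).trans ?_
      linarith [hC2 _ (rbpt_mem hr.1.le hr.2 θ)]
    · exact hk.norm.const_mul _
    · filter_upwards [hF.bf] with θ hθ
      have := ((hθ.sub_const (F θ)).mul_const (k θ)).norm
      simpa using this
  rw [integral_zero] at t1
  have t2 := ((L1conv hk).const_mul C).add t1
  rw [mul_zero, zero_add] at t2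
  refine squeeze_zero' ?_ ?_ t2
  · exact Eventually.of_forall fun r => integral_nonneg fun θ => norm_nonneg _
  · filter_upwards [ev_lt_one] with r hr
    have hcf := cont_circle hd.continuousOn hr.1.le hr.2
    have hcP := Po_cont_circle hk hr.1.le hr.2
    have i1 : Integrable (fun θ => ‖Po k (r * bpt θ) - k θ‖) arcM := ((integrable_cont hcP).sub hk).norm
    have i2 : Integrable (fun θ => ‖(f (r * bpt θ) - F θ) * k θ‖) arcM := by
      have : (fun θ => ‖(f (r * bpt θ) - F θ) * k θ‖) = fun θ => ‖k θ * f (r * bpt θ) - F θ * k θ‖ := by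
        funext θ; congr 1; ring
      rw [this]
      exact ((Integrable.mul_cont hk hcf (fun θ => hC2 _ (rbpt_mem hr.1.le hr.2 θ))).sub
        (int_mul_bdd hF hk)).norm
    rw [← integral_const_mul, ← integral_add (i1.const_mul C) i2]
    apply integral_mono_of_nonneg
    · filter_upwards with θ using norm_nonneg _
    · exact (i1.const_mul C).add i2
    · filter_upwards with θ
      have : f (r * bpt θ) * Po k (r * bpt θ) - F θ * k θ =
          f (r * bpt θ) * (Po k (r * bpt θ) - k θ) + (f (r * bpt θ) - F θ) * k θ := by ring
      rw [this]
      refine (norm_add_le _ _).trans ?_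
      rw [norm_mul (f _)]
      gcongr
      exact hC2 _ (rbpt_mem hr.1.le hr.2 θ)

/-- `F` is an `L¹` limit of boundary functions of elements of `M` -/
def L1Lim (M : Set (ℂ → ℂ)) (F : ℝ → ℂ) : Prop :=
  ∀ ε > 0, ∃ g ∈ M, ∃ G, BoundaryFn g G ∧ ∫ θ, ‖F θ - G θ‖ ∂arcM < ε

lemma conj_int (u : ℝ → ℂ) : ∫ θ, (starRingEnd ℂ) (u θ) ∂arcM = (starRingEnd ℂ) (∫ θ, u θ ∂arcM) :=
  integral_conj

/-- the essential estimate for elements of `M` -/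
lemma I_est {M : Set (ℂ → ℂ)} (hsub : ∀ f ∈ M, MemHinf f) (hinv : ∀ f ∈ M, bShift f ∈ M)
    {k : ℝ → ℂ} (hk : Integrable k arcM) (hann : Ann M k) {g : ℂ → ℂ} (hg : g ∈ M) {G : ℝ → ℂ}
    (hG : BoundaryFn g G) {φ : ℂ → ℂ} (hφ : DifferentiableOn ℂ φ uDisc)
    (hφ1 : ∀ w, ‖w‖ < 1 → ‖φ w‖ ≤ 1) {r : ℝ} (h0 : 0 < r) (h1 : r < 1) :
    ‖∫ θ, (starRingEnd ℂ) (φ (r * bpt θ)) * (g (r * bpt θ) *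
      (starRingEnd ℂ) (Ct (fun θ => (starRingEnd ℂ) (k θ)) (r * bpt θ))) ∂arcM‖ ≤
      ∫ θ, ‖g (r * bpt θ) * Po k (r * bpt θ) - G θ * k θ‖ ∂arcM +
      ∫ θ, ‖Po (fun θ => G θ * k θ) (r * bpt θ) - G θ * k θ‖ ∂arcM := by
  have hw : ∀ θ, ‖(r:ℂ) * bpt θ‖ < 1 := fun θ => by rw [norm_rbpt h0.le]; exact h1
  have hb := bdP (hsub g hg) hG
  set u : ℝ → ℂ := fun θ => G θ * k θ with hu
  have hui : Integrable u arcM := int_mul_bdd hb hk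
  have hu0 : ∫ θ, u θ ∂arcM = 0 := hann g hg G hG
  set H : ℂ → ℂ := Ct (fun θ => (starRingEnd ℂ) (u θ)) with hH
  have hHd : DifferentiableOn ℂ H uDisc := Ct_diff (integrable_conj hui)
  have hH0 : H 0 = 0 := by rw [hH, Ct_zero, conj_int, hu0, map_zero]
  have hgd : DifferentiableOn ℂ g uDisc := (hsub g hg).1
  have hcφ := cont_circle hφ.continuousOn h0.le h1
  have hcH := cont_circle hHd.continuousOn h0.le h1
  have hcg := cont_circle hgd.continuousOn h0.le h1
  have hcP := Po_cont_circle hk h0.le h1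
  have hcU := Po_cont_circle hui h0.le h1
  have hid : ∀ θ, (starRingEnd ℂ) (φ (r * bpt θ)) * (g (r * bpt θ) *
      (starRingEnd ℂ) (Ct (fun θ => (starRingEnd ℂ) (k θ)) (r * bpt θ))) =
      (starRingEnd ℂ) (φ (r * bpt θ) * H (r * bpt θ)) +
      (starRingEnd ℂ) (φ (r * bpt θ)) * (g (r * bpt θ) * Po k (r * bpt θ) - Po u (r * bpt θ)) := by
    intro θ
    have e1 := Po_eq hui (hw θ)
    have e2 := Po_eq hk (hw θ)
    have e3 := ann_ct hsub hinv hk hann hg hG (hw θ)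
    rw [map_mul]
    rw [hu0, e3] at e1
    rw [e1, e2]
    ring
  simp only [hid]
  have cc : Continuous (fun θ => (starRingEnd ℂ) (φ (r * bpt θ))) := Complex.continuous_conj.comp hcφ
  have c1 : Continuous (fun θ => (starRingEnd ℂ) (φ (r * bpt θ) * H (r * bpt θ))) :=
    Complex.continuous_conj.comp (hcφ.mul hcH)
  have c2 : Continuous (fun θ => (starRingEnd ℂ) (φ (r * bpt θ)) *
    (g (r * bpt θ) * Po k (r * bpt θ) - Po u (r * bpt θ))) := cc.mul ((hcg.mul hcP).sub hcU)
  rw [integral_add (integrable_cont c1) (integrable_cont c2)]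
  have hz : ∫ θ, (starRingEnd ℂ) (φ (r * bpt θ) * H (r * bpt θ)) ∂arcM = 0 := by
    rw [conj_int, mean_value (φ := fun w => φ w * H w) (hφ.mul hHd) h0.le h1, hH0]; simp
  rw [hz, zero_add]
  have i1 : Integrable (fun θ => ‖g (r * bpt θ) * Po k (r * bpt θ) - u θ‖) arcM :=
    ((integrable_cont (hcg.mul hcP)).sub hui).norm
  have i2 : Integrable (fun θ => ‖Po u (r * bpt θ) - u θ‖) arcM :=
    ((integrable_cont hcU).sub hui).norm
  rw [← integral_add i1 i2]
  refine norm_integral_le_of_norm_le (i1.add i2) ?_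
  filter_upwards with θ
  rw [norm_mul, Complex.norm_conj]
  refine (mul_le_of_le_one_left (norm_nonneg _) (hφ1 _ (hw θ))).trans ?_
  have : g (r * bpt θ) * Po k (r * bpt θ) - Po u (r * bpt θ) =
    (g (r * bpt θ) * Po k (r * bpt θ) - u θ) - (Po u (r * bpt θ) - u θ) := by ring
  rw [this]
  exact norm_sub_le _ _

lemma int_add5 {a b c d e : ℝ → ℂ} (ha : Integrable a arcM) (hb : Integrable b arcM)
    (hc : Integrable c arcM) (hd : Integrable d arcM) (he : Integrable e arcM) :
    ∫ θ, (((a θ + b θ) + c θ) + (d θ + e θ)) ∂arcM =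
      ((∫ θ, a θ ∂arcM + ∫ θ, b θ ∂arcM) + ∫ θ, c θ ∂arcM) + (∫ θ, d θ ∂arcM + ∫ θ, e θ ∂arcM) := by
  have hab : Integrable (fun θ => a θ + b θ) arcM := ha.add hb
  have habc : Integrable (fun θ => (a θ + b θ) + c θ) arcM := hab.add hc
  have hde : Integrable (fun θ => d θ + e θ) arcM := hd.add he
  rw [integral_add habc hde, integral_add hab hc, integral_add ha hb, integral_add hd he]

theorem key_claim {M : Set (ℂ → ℂ)} (hsub : ∀ f ∈ M, MemHinf f) (hinv : ∀ f ∈ M, bShift f ∈ M)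
    {k : ℝ → ℂ} (hk : Integrable k arcM) (hann : Ann M k) {f : ℂ → ℂ} (hf : MemHinf f) {F : ℝ → ℂ}
    (hF : BoundaryFn f F) (hlim : L1Lim M F) : ∫ θ, F θ * k θ ∂arcM = 0 := by
  have hb := bdP hf hF
  obtain ⟨C, hC1, hC2⟩ := hb.bd
  have hC0 : 0 ≤ C := (norm_nonneg _).trans (hC2 0 (by simp [mem_uDisc]))
  have hfd : DifferentiableOn ℂ f uDisc := hf.1
  have main : ∀ ε > 0, ‖∫ θ, F θ * k θ ∂arcM‖ ≤ (64 * C + 1) * ε := by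
    intro ε hε
    obtain ⟨φ, K, hφ, hK0, hφK, hφr⟩ := mult_exists hk hε
    obtain ⟨g, hg, G, hG, hFG⟩ := hlim (ε / (K + 1)) (by positivity)
    have hbg := bdP (hsub g hg) hG
    have hgd : DifferentiableOn ℂ g uDisc := (hsub g hg).1
    have hfc := int_mul_bdd hb hk
    have hgc := int_mul_bdd hbg hk
    have T := ((L1prod hf.1 hb hk).add (L1prod (hsub g hg).1 hbg hk)).add (L1conv hgc)
    rw [add_zero, add_zero] at T
    have T2 := T.add_const ((64 * C + 1) * ε)
    rw [zero_add] at T2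
    refine ge_of_tendsto T2 ?_
    filter_upwards [ev_lt_one] with r hr
    obtain ⟨h0, h1⟩ := hr
    have hw : ∀ θ, ‖(r:ℂ) * bpt θ‖ < 1 := fun θ => by rw [norm_rbpt h0.le]; exact h1
    set ck : ℝ → ℂ := fun θ => (starRingEnd ℂ) (k θ) with hck
    have hCkd : DifferentiableOn ℂ (Ct ck) uDisc := Ct_diff (integrable_conj hk)
    have hcφ := cont_circle hφ.continuousOn h0.le h1
    have hcf := cont_circle hfd.continuousOn h0.le h1
    have hcg := cont_circle hgd.continuousOn h0.le h1
    have hcP := Po_cont_circle hk h0.le h1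
    have hcC := cont_circle hCkd.continuousOn h0.le h1
    have hcN := cont_circle (Ct_diff hk).continuousOn h0.le h1
    have ccφ : Continuous (fun θ => (starRingEnd ℂ) (φ (r * bpt θ))) := Complex.continuous_conj.comp hcφ
    have ccC : Continuous (fun θ => (starRingEnd ℂ) (Ct ck (r * bpt θ))) := Complex.continuous_conj.comp hcC
    -- the five pieces
    set N : ℂ := ∫ θ, k θ ∂arcM with hN
    have hid : ∀ θ, f (r * bpt θ) * Po k (r * bpt θ) =
        (((1 - φ (r * bpt θ)) * (f (r * bpt θ) * Po k (r * bpt θ)) +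
        φ (r * bpt θ) * (f (r * bpt θ) * (Ct k (r * bpt θ) - N))) +
        (φ (r * bpt θ) - (starRingEnd ℂ) (φ (r * bpt θ))) *
          (f (r * bpt θ) * (starRingEnd ℂ) (Ct ck (r * bpt θ)))) +
        ((starRingEnd ℂ) (φ (r * bpt θ)) * ((f (r * bpt θ) - g (r * bpt θ)) *
          (starRingEnd ℂ) (Ct ck (r * bpt θ))) +
        (starRingEnd ℂ) (φ (r * bpt θ)) * (g (r * bpt θ) *
          (starRingEnd ℂ) (Ct ck (r * bpt θ)))) := by
      intro θ
      have e := Po_eq hk (hw θ)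
      rw [e]; ring
    have c1 : Continuous (fun θ => (1 - φ (r * bpt θ)) * (f (r * bpt θ) * Po k (r * bpt θ))) :=
      (continuous_const.sub hcφ).mul (hcf.mul hcP)
    have c2 : Continuous (fun θ => φ (r * bpt θ) * (f (r * bpt θ) * (Ct k (r * bpt θ) - N))) :=
      hcφ.mul (hcf.mul (hcN.sub continuous_const))
    have c3 : Continuous (fun θ => (φ (r * bpt θ) - (starRingEnd ℂ) (φ (r * bpt θ))) *
          (f (r * bpt θ) * (starRingEnd ℂ) (Ct ck (r * bpt θ)))) :=
      (hcφ.sub ccφ).mul (hcf.mul ccC)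
    have c4 : Continuous (fun θ => (starRingEnd ℂ) (φ (r * bpt θ)) * ((f (r * bpt θ) - g (r * bpt θ)) *
          (starRingEnd ℂ) (Ct ck (r * bpt θ)))) := ccφ.mul ((hcf.sub hcg).mul ccC)
    have c5 : Continuous (fun θ => (starRingEnd ℂ) (φ (r * bpt θ)) * (g (r * bpt θ) *
          (starRingEnd ℂ) (Ct ck (r * bpt θ)))) := ccφ.mul (hcg.mul ccC)
    have j1 := integrable_cont c1
    have j2 := integrable_cont c2
    have j3 := integrable_cont c3
    have j4 := integrable_cont c4
    have j5 := integrable_cont c5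
    have hI : ∫ θ, f (r * bpt θ) * Po k (r * bpt θ) ∂arcM =
        ((∫ θ, (1 - φ (r * bpt θ)) * (f (r * bpt θ) * Po k (r * bpt θ)) ∂arcM +
        ∫ θ, φ (r * bpt θ) * (f (r * bpt θ) * (Ct k (r * bpt θ) - N)) ∂arcM) +
        ∫ θ, (φ (r * bpt θ) - (starRingEnd ℂ) (φ (r * bpt θ))) *
          (f (r * bpt θ) * (starRingEnd ℂ) (Ct ck (r * bpt θ))) ∂arcM) +
        (∫ θ, (starRingEnd ℂ) (φ (r * bpt θ)) * ((f (r * bpt θ) - g (r * bpt θ)) *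
          (starRingEnd ℂ) (Ct ck (r * bpt θ))) ∂arcM +
        ∫ θ, (starRingEnd ℂ) (φ (r * bpt θ)) * (g (r * bpt θ) *
          (starRingEnd ℂ) (Ct ck (r * bpt θ))) ∂arcM) := by
      rw [← int_add5 j1 j2 j3 j4 j5]
      exact integral_congr_ae (Eventually.of_forall hid)
    have p2 : ∫ θ, φ (r * bpt θ) * (f (r * bpt θ) * (Ct k (r * bpt θ) - N)) ∂arcM = 0 := by
      rw [mean_value (φ := fun w => φ w * (f w * (Ct k w - N)))
        (hφ.mul (hfd.mul ((Ct_diff hk).sub_const _))) h0.le h1, Ct_zero]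
      simp [hN]
    have p1 : ‖∫ θ, (1 - φ (r * bpt θ)) * (f (r * bpt θ) * Po k (r * bpt θ)) ∂arcM‖ ≤ C * (32 * ε) := by
      have hi : Integrable (fun θ => ‖1 - φ (r * bpt θ)‖ * ‖Po k (r * bpt θ)‖) arcM :=
        integrable_cont ((continuous_const.sub hcφ).norm.mul hcP.norm)
      refine (norm_integral_le_of_norm_le (hi.const_mul C) ?_).trans ?_
      · filter_upwards with θ
        rw [norm_mul, norm_mul]
        have := hC2 _ (rbpt_mem h0.le h1 θ)
        calc _ = ‖f (r * bpt θ)‖ * (‖1 - φ (r * bpt θ)‖ * ‖Po k (r * bpt θ)‖) := by ring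
          _ ≤ _ := by gcongr
      · rw [integral_const_mul]
        exact mul_le_mul_of_nonneg_left (hφr r h0 h1).1 hC0
    have p3 : ‖∫ θ, (φ (r * bpt θ) - (starRingEnd ℂ) (φ (r * bpt θ))) *
          (f (r * bpt θ) * (starRingEnd ℂ) (Ct ck (r * bpt θ))) ∂arcM‖ ≤ C * (32 * ε) := by
      have hi : Integrable (fun θ => ‖φ (r * bpt θ) - (starRingEnd ℂ) (φ (r * bpt θ))‖ *
          ‖Ct ck (r * bpt θ)‖) arcM :=
        integrable_cont ((hcφ.sub ccφ).norm.mul hcC.norm)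
      refine (norm_integral_le_of_norm_le (hi.const_mul C) ?_).trans ?_
      · filter_upwards with θ
        rw [norm_mul, norm_mul, Complex.norm_conj]
        have := hC2 _ (rbpt_mem h0.le h1 θ)
        calc _ = ‖f (r * bpt θ)‖ * (‖φ (r * bpt θ) - (starRingEnd ℂ) (φ (r * bpt θ))‖ *
          ‖Ct ck (r * bpt θ)‖) := by ring
          _ ≤ _ := by gcongr
      · rw [integral_const_mul]
        exact mul_le_mul_of_nonneg_left (hφr r h0 h1).2 hC0
    have p4 : ‖∫ θ, (starRingEnd ℂ) (φ (r * bpt θ)) * ((f (r * bpt θ) - g (r * bpt θ)) *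
          (starRingEnd ℂ) (Ct ck (r * bpt θ))) ∂arcM‖ ≤ ε := by
      have hi : Integrable (fun θ => ‖f (r * bpt θ) - g (r * bpt θ)‖) arcM :=
        integrable_cont (hcf.sub hcg).norm
      refine (norm_integral_le_of_norm_le (hi.const_mul K) ?_).trans ?_
      · filter_upwards with θ
        rw [norm_mul, norm_mul, Complex.norm_conj, Complex.norm_conj]
        have := (hφK _ (hw θ)).2
        calc _ = (‖φ (r * bpt θ)‖ * ‖Ct ck (r * bpt θ)‖) * ‖f (r * bpt θ) - g (r * bpt θ)‖ := by ring
          _ ≤ _ := by gcongr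
      · rw [integral_const_mul]
        have e : ∀ θ, f (r * bpt θ) - g (r * bpt θ) = Po (fun θ => F θ - G θ) (r * bpt θ) := by
          intro θ
          rw [Po_sub hb.int hbg.int (hw θ), hb.po (hw θ), hbg.po (hw θ)]
        simp only [e]
        have h5 := (Po_L1 (hb.int.sub hbg.int) h0.le h1).trans hFG.le
        have h6 : K * (ε / (K + 1)) ≤ ε := by
          rw [mul_div_assoc', div_le_iff₀ (by positivity)]; nlinarith
        exact (mul_le_mul_of_nonneg_left h5 hK0).trans h6
    have p5 := I_est hsub hinv hk hann hg hG hφ (fun w hw => (hφK w hw).1) h0 h1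
    have p6 : ‖∫ θ, F θ * k θ ∂arcM‖ ≤ ‖∫ θ, f (r * bpt θ) * Po k (r * bpt θ) ∂arcM‖ +
        ∫ θ, ‖f (r * bpt θ) * Po k (r * bpt θ) - F θ * k θ‖ ∂arcM := by
      have h7 : ∫ θ, F θ * k θ ∂arcM = ∫ θ, f (r * bpt θ) * Po k (r * bpt θ) ∂arcM -
          ∫ θ, (f (r * bpt θ) * Po k (r * bpt θ) - F θ * k θ) ∂arcM := by
        rw [integral_sub (integrable_cont (by exact hcf.mul hcP)) hfc]; ring
      rw [h7]
      refine (norm_sub_le _ _).trans ?_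
      gcongr
      exact norm_integral_le_integral_norm _
    have p7 : ‖∫ θ, f (r * bpt θ) * Po k (r * bpt θ) ∂arcM‖ ≤ (64 * C + 1) * ε +
      (∫ θ, ‖g (r * bpt θ) * Po k (r * bpt θ) - G θ * k θ‖ ∂arcM +
      ∫ θ, ‖Po (fun θ => G θ * k θ) (r * bpt θ) - G θ * k θ‖ ∂arcM) := by
      rw [hI, p2, add_zero]
      refine (norm_add_le _ _).trans ?_
      refine (add_le_add (norm_add_le _ _) (norm_add_le _ _)).trans ?_
      linarith
    linarith
  by_contra hne
  have hpos : 0 < ‖∫ θ, F θ * k θ ∂arcM‖ := norm_pos_iff.2 hne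
  have := main (‖∫ θ, F θ * k θ ∂arcM‖ / (2 * (64 * C + 1))) (by positivity)
  have e : (64 * C + 1) * (‖∫ θ, F θ * k θ ∂arcM‖ / (2 * (64 * C + 1))) =
    ‖∫ θ, F θ * k θ ∂arcM‖ / 2 := by field_simp
  rw [e] at this
  linarith

/-! ## Finite-dimensional separation -/

lemma BoundaryFn.addf {f g : ℂ → ℂ} {F G : ℝ → ℂ} (hf : BoundaryFn f F) (hg : BoundaryFn g G) :
    BoundaryFn (fun z => f z + g z) (fun θ => F θ + G θ) := by
  filter_upwards [hf, hg] with θ h1 h2 using h1.add h2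

lemma BoundaryFn.smulf {f : ℂ → ℂ} {F : ℝ → ℂ} (c : ℂ) (hf : BoundaryFn f F) :
    BoundaryFn (fun z => c * f z) (fun θ => c * F θ) := by
  filter_upwards [hf] with θ h1 using h1.const_mul c

lemma BoundaryFn.zerof : BoundaryFn (fun _ => (0:ℂ)) (fun _ => 0) := by
  filter_upwards with θ using tendsto_const_nhds

lemma BoundaryFn.congrf {f : ℂ → ℂ} {F G : ℝ → ℂ} (hf : BoundaryFn f F) (h : F =ᵐ[arcM] G) :
    BoundaryFn f G := by
  filter_upwards [hf, h] with θ h1 h2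
  rw [← h2]; exact h1

/-- integrals against finitely many test functions of elements of `M` -/
def testSub (M : Set (ℂ → ℂ)) (hsub : ∀ f ∈ M, MemHinf f) (hzero : (fun _ : ℂ => (0 : ℂ)) ∈ M)
    (hadd : ∀ f ∈ M, ∀ g ∈ M, (fun z => f z + g z) ∈ M)
    (hsmul : ∀ c : ℂ, ∀ f ∈ M, (fun z => c * f z) ∈ M) {n : ℕ} (h : Fin n → ℝ → ℂ)
    (hi : ∀ i, Integrable (h i) arcM) : Submodule ℂ (Fin n → ℂ) where
  carrier := {v | ∃ g ∈ M, ∃ G, BoundaryFn g G ∧ ∀ i, v i = ∫ θ, G θ * h i θ ∂arcM}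
  zero_mem' := ⟨_, hzero, _, BoundaryFn.zerof, fun i => by simp⟩
  add_mem' := by
    rintro a b ⟨g, hg, G, hG, h1⟩ ⟨g', hg', G', hG', h2⟩
    refine ⟨_, hadd g hg g' hg', _, hG.addf hG', fun i => ?_⟩
    simp only [add_mul]
    rw [integral_add (int_mul_bdd (bdP (hsub g hg) hG) (hi i))
      (int_mul_bdd (bdP (hsub g' hg') hG') (hi i)), Pi.add_apply, h1, h2]
  smul_mem' := by
    rintro c a ⟨g, hg, G, hG, h1⟩
    refine ⟨_, hsmul c g hg, _, hG.smulf c, fun i => ?_⟩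
    simp only [mul_assoc]
    rw [integral_const_mul, Pi.smul_apply, h1, smul_eq_mul]

theorem mem_of_ann {M : Set (ℂ → ℂ)} (hsub : ∀ f ∈ M, MemHinf f)
    (hzero : (fun _ : ℂ => (0 : ℂ)) ∈ M)
    (hadd : ∀ f ∈ M, ∀ g ∈ M, (fun z => f z + g z) ∈ M)
    (hsmul : ∀ c : ℂ, ∀ f ∈ M, (fun z => c * f z) ∈ M)
    (hclosed : HinfWStarClosure M ⊆ M) {f : ℂ → ℂ} (hf : MemHinf f)
    (H : ∀ F, BoundaryFn f F → ∀ k, Integrable k arcM → Ann M k → ∫ θ, F θ * k θ ∂arcM = 0) :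
    f ∈ M := by
  apply hclosed
  refine ⟨hf, fun F hF n h hi ε hε => ?_⟩
  have hb := bdP hf hF
  have key : (fun i => ∫ θ, F θ * h i θ ∂arcM) ∈ testSub M hsub hzero hadd hsmul h hi := by
    by_contra hne
    obtain ⟨l, hl1, hl2⟩ := Submodule.exists_le_ker_of_notMem hne
    set c : Fin n → ℂ := fun i => l (fun j => if i = j then 1 else 0) with hc
    have hlc : ∀ v : Fin n → ℂ, l v = ∑ i, v i * c i := by
      intro v
      rw [LinearMap.pi_apply_eq_sum_univ l v]
      simp [hc]
    have hsum : ∀ (g : ℂ → ℂ) (G : ℝ → ℂ), BdP g G → ∫ θ, G θ * (∑ i, h i θ * c i) ∂arcM =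
        l (fun i => ∫ θ, G θ * h i θ ∂arcM) := by
      intro g G hG
      rw [hlc]
      simp only [Finset.mul_sum, ← mul_assoc]
      rw [integral_finsetSum]
      · simp only [integral_mul_const]
      · intro i _
        exact (int_mul_bdd hG (hi i)).mul_const _
    apply hl1
    rw [← hsum f F hb]
    apply H F hF
    · exact integrable_finsetSum _ fun i _ => (hi i).mul_const _
    · intro g hg G hG
      rw [hsum g G (bdP (hsub g hg) hG)]
      exact hl2 ⟨g, hg, G, hG, fun i => rfl⟩
  obtain ⟨g, hg, G, hG, h1⟩ := key
  refine ⟨g, hg, G, hG, fun i => ?_⟩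
  simp only [sub_mul]
  rw [integral_sub (int_mul_bdd hb (hi i)) (int_mul_bdd (bdP (hsub g hg) hG) (hi i)), ← h1 i]
  simpa using hε

/-! ## The L² model -/

/-- boundary functions in `H²` orthogonal to `M` -/
def InS (M : Set (ℂ → ℂ)) (u : ℝ → ℂ) : Prop :=
  MemLp u 2 arcM ∧ (∀ n : ℕ, 1 ≤ n → ∫ θ, u θ * bpt θ ^ n ∂arcM = 0) ∧
    ∀ g ∈ M, ∀ G, BoundaryFn g G → ∫ θ, (starRingEnd ℂ) (G θ) * u θ ∂arcM = 0

lemma BdP.memLp {f : ℂ → ℂ} {F : ℝ → ℂ} (h : BdP f F) : MemLp F 2 arcM := by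
  obtain ⟨C, h1, _⟩ := h.bd
  exact MemLp.of_bound h.int.aestronglyMeasurable C h1

lemma memLp_conj {u : ℝ → ℂ} (h : MemLp u 2 arcM) : MemLp (fun θ => (starRingEnd ℂ) (u θ)) 2 arcM :=
  h.star

lemma memLp_int {u : ℝ → ℂ} (h : MemLp u 2 arcM) : Integrable u arcM :=
  h.integrable (by norm_num)

lemma memLp_mul {u v : ℝ → ℂ} (h : MemLp u 2 arcM) (h' : MemLp v 2 arcM) :
    Integrable (fun θ => u θ * v θ) arcM := h.integrable_mul h'

lemma memLp_bpt (n : ℤ) : MemLp (fun θ => bpt θ ^ n) 2 arcM :=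
  MemLp.of_bound (continuous_bpt_zpow n).aestronglyMeasurable 1
    (Eventually.of_forall fun θ => (norm_bpt_zpow n θ).le)

lemma memLp_bpt_mul {u : ℝ → ℂ} (h : MemLp u 2 arcM) : MemLp (fun θ => bpt θ * u θ) 2 arcM := by
  refine h.of_le (continuous_bpt.aestronglyMeasurable.mul h.1) (Eventually.of_forall fun θ => ?_)
  rw [norm_mul, norm_bpt, one_mul]

lemma InS.fc_neg {M : Set (ℂ → ℂ)} {u : ℝ → ℂ} (h : InS M u) {n : ℤ} (hn : n < 0) : fc u n = 0 := by
  have := h.2.1 (-n).toNat (by omega)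
  unfold fc
  rw [← this]
  congr 1; ext θ
  rw [← zpow_natCast, Int.toNat_of_nonneg (by omega)]

lemma InS.shift {M : Set (ℂ → ℂ)} (hsub : ∀ f ∈ M, MemHinf f) (hinv : ∀ f ∈ M, bShift f ∈ M)
    {u : ℝ → ℂ} (h : InS M u) : InS M (fun θ => bpt θ * u θ) := by
  refine ⟨memLp_bpt_mul h.1, fun n hn => ?_, fun g hg G hG => ?_⟩
  · rw [← h.2.1 (n + 1) (by omega)]
    congr 1; ext θ; ring
  · have h1 := h.2.2 _ (hinv g hg) _ (bShift_bd hG)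
    have h2 := h.2.1 1 le_rfl
    have e : ∀ θ, (starRingEnd ℂ) ((G θ - g 0) * (bpt θ)⁻¹) * u θ =
        (starRingEnd ℂ) (G θ) * (bpt θ * u θ) - (starRingEnd ℂ) (g 0) * (u θ * bpt θ ^ 1) := by
      intro θ
      rw [map_mul, ← conj_bpt, Complex.conj_conj, map_sub]; ring
    simp only [e] at h1
    have hi : Integrable (fun θ => u θ * bpt θ ^ 1) arcM := by
      have := memLp_int (memLp_bpt_mul h.1)
      refine this.congr (Eventually.of_forall fun θ => ?_)
      simp only; ring
    rw [integral_sub (memLp_mul (memLp_conj (bdP (hsub g hg) hG).memLp) (memLp_bpt_mul h.1))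
      (hi.const_mul _), integral_const_mul, h2, mul_zero, sub_zero] at h1
    exact h1

lemma InS.pow {M : Set (ℂ → ℂ)} (hsub : ∀ f ∈ M, MemHinf f) (hinv : ∀ f ∈ M, bShift f ∈ M)
    {u : ℝ → ℂ} (h : InS M u) (j : ℕ) : InS M (fun θ => bpt θ ^ j * u θ) := by
  induction j with
  | zero => simpa using h
  | succ j ih =>
    have := ih.shift hsub hinv
    have e : (fun θ => bpt θ ^ (j+1) * u θ) = fun θ => bpt θ * (bpt θ ^ j * u θ) := by
      funext θ; ring
    rw [e]; exact this

lemma InS.smul {M : Set (ℂ → ℂ)} {u : ℝ → ℂ} (h : InS M u) (c : ℂ) : InS M (fun θ => c * u θ) := by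
  refine ⟨h.1.const_mul c, fun n hn => ?_, fun g hg G hG => ?_⟩
  · simp only [mul_assoc]
    rw [integral_const_mul, h.2.1 n hn, mul_zero]
  · simp only [mul_left_comm _ c]
    rw [integral_const_mul, h.2.2 g hg G hG, mul_zero]

lemma InS.congr {M : Set (ℂ → ℂ)} {u v : ℝ → ℂ} (h : InS M u) (e : u =ᵐ[arcM] v) : InS M v := by
  refine ⟨(memLp_congr_ae e).1 h.1, fun n hn => ?_, fun g hg G hG => ?_⟩
  · rw [← h.2.1 n hn]
    apply integral_congr_ae
    filter_upwards [e] with θ h1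
    simp only [h1]
  · rw [← h.2.2 g hg G hG]
    apply integral_congr_ae
    filter_upwards [e] with θ h1
    simp only [h1]

/-- the L² space -/
abbrev E2 := Lp ℂ 2 arcM

lemma inner_int (x y : E2) : inner ℂ x y = ∫ θ, (starRingEnd ℂ) (x θ) * y θ ∂arcM := by
  rw [L2.inner_def]
  congr 1; ext θ
  rw [RCLike.inner_apply, mul_comm]

lemma inner_toLp {u v : ℝ → ℂ} (hu : MemLp u 2 arcM) (hv : MemLp v 2 arcM) :
    inner ℂ (hu.toLp u) (hv.toLp v) = ∫ θ, (starRingEnd ℂ) (u θ) * v θ ∂arcM := by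
  rw [inner_int]
  apply integral_congr_ae
  filter_upwards [hu.coeFn_toLp, hv.coeFn_toLp] with θ h1 h2
  rw [h1, h2]

/-- `M` in L² -/
def subA (M : Set (ℂ → ℂ)) (hzero : (fun _ : ℂ => (0 : ℂ)) ∈ M)
    (hadd : ∀ f ∈ M, ∀ g ∈ M, (fun z => f z + g z) ∈ M)
    (hsmul : ∀ c : ℂ, ∀ f ∈ M, (fun z => c * f z) ∈ M) : Submodule ℂ E2 where
  carrier := {x | ∃ g ∈ M, BoundaryFn g x}
  zero_mem' := ⟨_, hzero, BoundaryFn.zerof.congrf (by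
    filter_upwards [Lp.coeFn_zero ℂ 2 arcM] with θ h; rw [h]; rfl)⟩
  add_mem' := by
    rintro a b ⟨g, hg, h1⟩ ⟨g', hg', h2⟩
    refine ⟨_, hadd g hg g' hg', (h1.addf h2).congrf ?_⟩
    filter_upwards [Lp.coeFn_add a b] with θ h; rw [h]; rfl
  smul_mem' := by
    rintro c a ⟨g, hg, h1⟩
    refine ⟨_, hsmul c g hg, (h1.smulf c).congrf ?_⟩
    filter_upwards [Lp.coeFn_smul c a] with θ h; rw [h]; rfl

/-- negative frequencies -/
def subB : Submodule ℂ E2 :=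
  Submodule.span ℂ (range fun n : ℕ => (memLp_bpt (-(n + 1 : ℤ))).toLp _)

lemma orth_B {x : E2} (h : ∀ n : ℕ, 1 ≤ n → ∫ θ, x θ * bpt θ ^ n ∂arcM = 0) {b : E2} (hb : b ∈ subB) :
    inner ℂ b x = 0 := by
  unfold subB at hb
  induction hb using Submodule.span_induction with
  | mem y hy =>
    obtain ⟨n, rfl⟩ := hy
    rw [inner_int, ← h (n + 1) (by omega)]
    apply integral_congr_ae
    filter_upwards [(memLp_bpt (-(n + 1 : ℤ))).coeFn_toLp] with θ h1
    rw [h1, map_zpow₀, conj_bpt, inv_zpow', neg_neg, mul_comm]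
    norm_cast
  | zero => simp
  | add y z _ _ hy hz => rw [inner_add_left, hy, hz, add_zero]
  | smul c y _ hy => rw [inner_smul_left, hy, mul_zero]

/-- the orthogonal complement -/
def subS {M : Set (ℂ → ℂ)} (hzero : (fun _ : ℂ => (0 : ℂ)) ∈ M)
    (hadd : ∀ f ∈ M, ∀ g ∈ M, (fun z => f z + g z) ∈ M)
    (hsmul : ∀ c : ℂ, ∀ f ∈ M, (fun z => c * f z) ∈ M) : Submodule ℂ E2 := (subA M hzero hadd hsmul ⊔ subB)ᗮ

lemma mem_subS {M : Set (ℂ → ℂ)} (hzero : (fun _ : ℂ => (0 : ℂ)) ∈ M)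
    (hadd : ∀ f ∈ M, ∀ g ∈ M, (fun z => f z + g z) ∈ M)
    (hsmul : ∀ c : ℂ, ∀ f ∈ M, (fun z => c * f z) ∈ M)
    (hsub : ∀ f ∈ M, MemHinf f) (x : E2) : x ∈ subS hzero hadd hsmul ↔ InS M x := by
  unfold subS
  rw [← Submodule.inf_orthogonal, Submodule.mem_inf, Submodule.mem_orthogonal,
    Submodule.mem_orthogonal]
  constructor
  · rintro ⟨h1, h2⟩
    refine ⟨Lp.memLp x, fun n hn => ?_, fun g hg G hG => ?_⟩
    · obtain ⟨m, rfl⟩ : ∃ m, n = m + 1 := ⟨n - 1, by omega⟩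
      have := h2 _ (Submodule.subset_span ⟨m, rfl⟩)
      rw [inner_int] at this
      rw [← this]
      apply integral_congr_ae
      filter_upwards [(memLp_bpt (-(m + 1 : ℤ))).coeFn_toLp] with θ h1
      rw [h1, map_zpow₀, conj_bpt, inv_zpow', neg_neg, mul_comm]
      norm_cast
    · have hL := (bdP (hsub g hg) hG).memLp
      have := h1 (hL.toLp G) ⟨g, hg, hG.congrf hL.coeFn_toLp.symm⟩
      rw [inner_int] at this
      rw [← this]
      apply integral_congr_ae
      filter_upwards [hL.coeFn_toLp] with θ h1
      rw [h1]
  · rintro ⟨_, h2, h3⟩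
    refine ⟨?_, fun b hb => orth_B h2 hb⟩
    rintro a ⟨g, hg, hG⟩
    rw [inner_int]
    exact h3 g hg _ hG

lemma proj_S {M : Set (ℂ → ℂ)} (hsub : ∀ f ∈ M, MemHinf f) (hzero : (fun _ : ℂ => (0 : ℂ)) ∈ M)
    (hadd : ∀ f ∈ M, ∀ g ∈ M, (fun z => f z + g z) ∈ M)
    (hsmul : ∀ c : ℂ, ∀ f ∈ M, (fun z => c * f z) ∈ M)
    {u : ℝ → ℂ} (hu : MemLp u 2 arcM) : ∃ v, InS M v ∧ ∀ s, InS M s →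
    ∫ θ, (starRingEnd ℂ) (v θ) * s θ ∂arcM = ∫ θ, (starRingEnd ℂ) (u θ) * s θ ∂arcM := by
  have : CompleteSpace (subS hzero hadd hsmul) :=
    (Submodule.isClosed_orthogonal _).completeSpace_coe
  set v : E2 := (subS hzero hadd hsmul).starProjection (hu.toLp u) with hv
  refine ⟨v, (mem_subS hzero hadd hsmul hsub v).1 (Submodule.starProjection_apply_mem _ _), fun s hs => ?_⟩
  have hs' : hs.1.toLp s ∈ subS hzero hadd hsmul :=
    (mem_subS hzero hadd hsmul hsub _).2 (hs.congr hs.1.coeFn_toLp.symm)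
  have h1 := Submodule.starProjection_inner_eq_zero (K := subS hzero hadd hsmul) (hu.toLp u) _ hs'
  rw [inner_sub_left, sub_eq_zero, inner_toLp, ← hv, inner_int] at h1
  rw [h1]
  apply integral_congr_ae
  filter_upwards [hs.1.coeFn_toLp] with θ h1
  rw [h1]

lemma L1Lim_of_orth {M : Set (ℂ → ℂ)} (hsub : ∀ f ∈ M, MemHinf f) (hzero : (fun _ : ℂ => (0 : ℂ)) ∈ M)
    (hadd : ∀ f ∈ M, ∀ g ∈ M, (fun z => f z + g z) ∈ M)
    (hsmul : ∀ c : ℂ, ∀ f ∈ M, (fun z => c * f z) ∈ M)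
    {f : ℂ → ℂ} (hf : MemHinf f) {F : ℝ → ℂ} (hF : BoundaryFn f F)
    (h : ∀ s, InS M s → ∫ θ, (starRingEnd ℂ) (F θ) * s θ ∂arcM = 0) : L1Lim M F := by
  intro ε hε
  have hb := bdP hf hF
  have hcl : hb.memLp.toLp F ∈ (subA M hzero hadd hsmul ⊔ subB).topologicalClosure := by
    rw [← Submodule.orthogonal_orthogonal_eq_closure, Submodule.mem_orthogonal']
    intro s hs
    have := h s ((mem_subS hzero hadd hsmul hsub s).1 hs)
    rw [inner_int, ← this]
    apply integral_congr_ae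
    filter_upwards [hb.memLp.coeFn_toLp] with θ h1
    rw [h1]
  obtain ⟨y, hy, hd⟩ := Metric.mem_closure_iff.1 hcl ε hε
  obtain ⟨a, ⟨g, hg, hG⟩, b, hbB, rfl⟩ := Submodule.mem_sup.1 hy
  refine ⟨g, hg, a, hG, ?_⟩
  set z : E2 := hb.memLp.toLp F - a with hz
  have hzF : z =ᵐ[arcM] fun θ => F θ - a θ := by
    filter_upwards [Lp.coeFn_sub (hb.memLp.toLp F) a, hb.memLp.coeFn_toLp] with θ h1 h2
    rw [hz, h1, Pi.sub_apply, h2]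
  have hga := bdP (hsub g hg) hG
  have horth : inner ℂ b z = 0 := by
    refine orth_B (fun n hn => ?_) hbB
    have e1 := hb.neg (-n) (by omega)
    have e2 := hga.neg (-n) (by omega)
    unfold fc at e1 e2
    have : ∫ θ, (F θ - a θ) * bpt θ ^ (-(-(n:ℤ))) ∂arcM = 0 := by
      simp only [sub_mul]
      rw [integral_sub (int_zpow hb.int _) (int_zpow hga.int _), e1, e2, sub_zero]
    rw [← this]
    apply integral_congr_ae
    filter_upwards [hzF] with θ h1
    rw [h1, neg_neg, zpow_natCast]
  have hle : ‖z‖ ≤ ‖z - b‖ := by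
    have h3 := norm_sub_sq (𝕜 := ℂ) z b
    rw [inner_eq_zero_symm.1 horth] at h3
    simp only [map_zero, mul_zero, sub_zero] at h3
    nlinarith [norm_nonneg z, norm_nonneg (z - b), sq_nonneg ‖b‖]
  have hzε : ‖z‖ < ε := by
    refine hle.trans_lt ?_
    rw [dist_eq_norm] at hd
    rwa [hz, sub_sub]
  refine lt_of_le_of_lt ?_ hzε
  have e : ∫ θ, ‖F θ - a θ‖ ∂arcM = (eLpNorm z 1 arcM).toReal := by
    rw [eLpNorm_one_eq_lintegral_enorm, ← integral_norm_eq_lintegral_enorm (Lp.aestronglyMeasurable z)]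
    apply integral_congr_ae
    filter_upwards [hzF] with θ h1
    rw [h1]
  rw [e, Lp.norm_def]
  apply ENNReal.toReal_mono (Lp.eLpNorm_ne_top z)
  exact eLpNorm_le_eLpNorm_of_exponent_le (by norm_num) (Lp.aestronglyMeasurable z)

/-! ## The theorem of Beurling -/

lemma fc_pow_mul (u : ℝ → ℂ) (j : ℕ) (m : ℤ) : fc (fun θ => bpt θ ^ j * u θ) m = fc u (m - j) := by
  unfold fc
  congr 1; ext θ
  rw [show -(m - (j:ℤ)) = -m + j by ring, zpow_add₀ (bpt_ne_zero θ), zpow_natCast]; ring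

lemma conj_bpt_pow (θ : ℝ) (n : ℕ) : (starRingEnd ℂ) (bpt θ ^ n) = bpt θ ^ (-(n:ℤ)) := by
  rw [map_pow, conj_bpt, zpow_neg, zpow_natCast, inv_pow]

theorem beurling {M : Set (ℂ → ℂ)} (hsub : ∀ f ∈ M, MemHinf f) (hzero : (fun _ : ℂ => (0 : ℂ)) ∈ M)
    (hadd : ∀ f ∈ M, ∀ g ∈ M, (fun z => f z + g z) ∈ M)
    (hsmul : ∀ c : ℂ, ∀ f ∈ M, (fun z => c * f z) ∈ M)
    (hinv : ∀ f ∈ M, bShift f ∈ M) (hne : ∃ u, InS M u ∧ ¬ u =ᵐ[arcM] 0) :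
    ∃ Θ, InS M Θ ∧ (∀ᵐ θ ∂arcM, ‖Θ θ‖ = 1) ∧
      ∀ h, InS M h → (∀ j : ℕ, ∫ θ, (starRingEnd ℂ) (bpt θ ^ j * Θ θ) * h θ ∂arcM = 0) →
        h =ᵐ[arcM] 0 := by
  classical
  have hex : ∃ n : ℕ, ∃ u, InS M u ∧ fc u n ≠ 0 := by
    obtain ⟨u, hu, hu0⟩ := hne
    by_contra hcon
    push Not at hcon
    apply hu0
    refine fc_unique (memLp_int hu.1) fun n => ?_
    rcases lt_or_ge n 0 with hn | hn
    · exact hu.fc_neg hn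
    · have := hcon n.toNat u hu
      rwa [Int.toNat_of_nonneg hn] at this
  set n := Nat.find hex with hn
  obtain ⟨u, hu, hun⟩ := Nat.find_spec hex
  have hmin : ∀ s, InS M s → ∀ m : ℤ, m < n → fc s m = 0 := by
    intro s hs m hm
    rcases lt_or_ge m 0 with h | h
    · exact hs.fc_neg h
    · have := Nat.find_min hex (m := m.toNat) (by omega)
      push Not at this
      have := this s hs
      rwa [Int.toNat_of_nonneg h] at this
  obtain ⟨v, hv, hvp⟩ := proj_S hsub hzero hadd hsmul (memLp_bpt n)
  have hvp' : ∀ s, InS M s → ∫ θ, (starRingEnd ℂ) (v θ) * s θ ∂arcM = fc s n := by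
    intro s hs
    rw [hvp s hs]
    unfold fc
    congr 1; ext θ
    rw [zpow_natCast, conj_bpt_pow, mul_comm]
  set w : ℝ → ℂ := fun θ => (starRingEnd ℂ) (v θ) * v θ with hw
  have hwi : Integrable w arcM := memLp_mul (memLp_conj hv.1) hv.1
  have hwc : (fun θ => (starRingEnd ℂ) (w θ)) = w := by
    funext θ; simp only [hw, map_mul, Complex.conj_conj]; ring
  have hfneg : ∀ m : ℤ, m < 0 → fc w m = 0 := by
    intro m hm
    have h1 := hvp' _ (hv.pow hsub hinv (-m).toNat)
    rw [fc_pow_mul, hmin v hv _ (by omega)] at h1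
    rw [← h1]
    unfold fc
    congr 1; ext θ
    have e : bpt θ ^ (-m) = bpt θ ^ (-m).toNat := by
      rw [← zpow_natCast, Int.toNat_of_nonneg (by omega)]
    rw [e, hw]; ring
  have hfpos : ∀ m : ℤ, 0 < m → fc w m = 0 := by
    intro m hm
    rw [← hwc, fc_conj, hfneg (-m) (by omega), map_zero]
  set c := fc w 0 with hc
  have hwconst : ∀ᵐ θ ∂arcM, w θ = c := by
    have : (fun θ => w θ - c) =ᵐ[arcM] 0 := by
      refine fc_unique (hwi.sub (integrable_const c)) fun m => ?_
      have e : fc (fun θ => w θ - c) m = fc w m - c * ∫ θ, bpt θ ^ (-m) ∂arcM := by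
        unfold fc
        simp only [sub_mul]
        rw [integral_sub (int_zpow hwi _) ((int_zpow' _).const_mul _), integral_const_mul]
      rw [e, integral_bzpow]
      rcases lt_trichotomy m 0 with h | h | h
      · rw [hfneg m h, if_neg (by omega)]; simp
      · subst h; simp [hc]
      · rw [hfpos m h, if_neg (by omega)]; simp
    filter_upwards [this] with θ h
    simpa [sub_eq_zero] using h
  have hwn : ∀ θ, w θ = ((‖v θ‖ ^ 2 : ℝ) : ℂ) := by
    intro θ
    simp only [hw]
    rw [mul_comm, Complex.mul_conj, Complex.normSq_eq_norm_sq]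
  have hvc : ∀ᵐ θ ∂arcM, ‖v θ‖ ^ 2 = c.re := by
    filter_upwards [hwconst] with θ h
    rw [hwn] at h
    rw [← h, Complex.ofReal_re]
  have hcpos : 0 < c.re := by
    by_contra hcon
    apply hun
    rw [← hvp' u hu]
    apply integral_eq_zero_of_ae
    filter_upwards [hvc] with θ h
    have h1 : ‖v θ‖ ^ 2 = 0 := le_antisymm (by linarith) (sq_nonneg _)
    have : v θ = 0 := by simpa using h1
    simp [this]
  set α : ℂ := (((Real.sqrt c.re)⁻¹ : ℝ) : ℂ) with hα
  have hs0 : 0 < Real.sqrt c.re := Real.sqrt_pos.2 hcpos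
  have hvn : ∀ᵐ θ ∂arcM, ‖v θ‖ = Real.sqrt c.re := by
    filter_upwards [hvc] with θ h
    rw [← h, Real.sqrt_sq (norm_nonneg _)]
  have hαn : ‖α‖ = (Real.sqrt c.re)⁻¹ := by
    rw [hα, Complex.norm_real, Real.norm_of_nonneg (by positivity)]
  have hα0 : α ≠ 0 := by
    rw [← norm_ne_zero_iff, hαn]; positivity
  refine ⟨fun θ => α * v θ, hv.smul α, ?_, fun h hh hj => ?_⟩
  · filter_upwards [hvn] with θ h
    rw [norm_mul, hαn, h, inv_mul_cancel₀ hs0.ne']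
  · have hz : (fun θ => (starRingEnd ℂ) (v θ) * h θ) =ᵐ[arcM] 0 := by
      refine fc_unique (memLp_mul (memLp_conj hv.1) hh.1) fun m => ?_
      rcases lt_or_ge m 0 with hm | hm
      · have h1 := hvp' _ (hh.pow hsub hinv (-m).toNat)
        rw [fc_pow_mul, hmin h hh _ (by omega)] at h1
        rw [← h1]
        unfold fc
        congr 1; ext θ
        have e : bpt θ ^ (-m) = bpt θ ^ (-m).toNat := by
          rw [← zpow_natCast, Int.toNat_of_nonneg (by omega)]
        rw [e]; ring
      · have h1 := hj m.toNat
        have e : ∀ θ, (starRingEnd ℂ) (bpt θ ^ m.toNat * (α * v θ)) * h θ =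
            (starRingEnd ℂ) α * ((starRingEnd ℂ) (v θ) * h θ * bpt θ ^ (-m)) := by
          intro θ
          rw [map_mul, conj_bpt_pow, Int.toNat_of_nonneg hm, map_mul]; ring
        simp only [e] at h1
        rw [integral_const_mul] at h1
        rcases mul_eq_zero.1 h1 with h2 | h2
        · exact absurd ((map_eq_zero _).1 h2) hα0
        · exact h2
    filter_upwards [hz, hvn] with θ h1 h2
    have hv0 : v θ ≠ 0 := by rw [← norm_ne_zero_iff, h2]; exact hs0.ne'
    rcases mul_eq_zero.1 h1 with h3 | h3
    · exact absurd ((map_eq_zero _).1 h3) hv0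
    · exact h3

theorem wstar_closed_invariant_subspace_Hinf (M : Set (ℂ → ℂ))
    (hsub : ∀ f ∈ M, MemHinf f)
    (hzero : (fun _ : ℂ => (0 : ℂ)) ∈ M)
    (hadd : ∀ f ∈ M, ∀ g ∈ M, (fun z => f z + g z) ∈ M)
    (hsmul : ∀ c : ℂ, ∀ f ∈ M, (fun z => c * f z) ∈ M)
    (hclosed : HinfWStarClosure M ⊆ M)
    (hproper : ∃ f : ℂ → ℂ, MemHinf f ∧ f ∉ M)
    (hinv : ∀ f ∈ M, bShift f ∈ M) :
    ∃ ϑ : ℂ → ℂ, IsInner ϑ ∧ M = {f | MemKinf ϑ f} := by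
  have step : ∀ f F, MemHinf f → BoundaryFn f F →
      (∀ s, InS M s → ∫ θ, (starRingEnd ℂ) (F θ) * s θ ∂arcM = 0) → f ∈ M := by
    intro f F hf hF h
    refine mem_of_ann hsub hzero hadd hsmul hclosed hf fun F' hF' k hk hann => ?_
    refine key_claim hsub hinv hk hann hf hF' ?_
    refine L1Lim_of_orth hsub hzero hadd hsmul hf hF' fun s hs => ?_
    rw [← h s hs]
    apply integral_congr_ae
    filter_upwards [bd_unique hF hF'] with θ e
    rw [e]
  have hne : ∃ u, InS M u ∧ ¬ u =ᵐ[arcM] 0 := by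
    by_contra hcon
    push Not at hcon
    obtain ⟨f, hf, hfM⟩ := hproper
    obtain ⟨F, hF⟩ := hinf_bd hf
    refine hfM (step f F hf hF.bf fun s hs => ?_)
    apply integral_eq_zero_of_ae
    filter_upwards [hcon s hs] with θ h
    simp [h]
  obtain ⟨Θ, hΘ, hΘ1, huniq⟩ := beurling hsub hzero hadd hsmul hinv hne
  obtain ⟨hϑ, hϑb⟩ := ct_bdP (memLp_int hΘ.1) (K := 1) (hΘ1.mono fun θ h => h.le)
    (fun n hn => hΘ.fc_neg hn)
  refine ⟨Ct Θ, ⟨hϑ, Θ, hϑb.bf, hΘ1⟩, ?_⟩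
  have hunit : ∀ᵐ θ ∂arcM, Θ θ * (starRingEnd ℂ) (Θ θ) = 1 := by
    filter_upwards [hΘ1] with θ h
    rw [Complex.mul_conj, Complex.normSq_eq_norm_sq, h]; simp
  ext f
  constructor
  · intro hfM
    have hf := hsub f hfM
    obtain ⟨F, hF⟩ := hinf_bd hf
    obtain ⟨C, hC, _⟩ := hF.bd
    have hGi : Integrable (fun θ => Θ θ * (starRingEnd ℂ) (F θ)) arcM :=
      memLp_mul hΘ.1 (memLp_conj hF.memLp)
    have hGn : ∀ n : ℤ, n ≤ 0 → fc (fun θ => Θ θ * (starRingEnd ℂ) (F θ)) n = 0 := by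
      intro n hn
      rw [← (hΘ.pow hsub hinv (-n).toNat).2.2 f hfM F hF.bf]
      unfold fc
      congr 1; ext θ
      have e : bpt θ ^ (-n) = bpt θ ^ (-n).toNat := by
        rw [← zpow_natCast, Int.toNat_of_nonneg (by omega)]
      rw [e]; ring
    obtain ⟨hg, hgb⟩ := ct_bdP hGi (K := C) (by
      filter_upwards [hC, hΘ1] with θ h1 h2
      rw [norm_mul, h2, Complex.norm_conj, one_mul]; exact h1) (fun n hn => hGn n hn.le)
    refine ⟨hf, F, Θ, _, _, hF.bf, hϑb.bf, hg, ?_, hgb.bf, ?_⟩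
    · rw [hgb.zero]; exact hGn 0 le_rfl
    · filter_upwards [hunit] with θ h
      rw [map_mul, Complex.conj_conj, ← mul_assoc, h, one_mul]
  · rintro ⟨hf, F, Θ', G, g, hF, hΘ', hg, hg0, hG, hFG⟩
    have hgb := bdP hg hG
    have hfb := bdP hf hF
    have hFG' : ∀ᵐ θ ∂arcM, F θ = Θ θ * (starRingEnd ℂ) (G θ) := by
      filter_upwards [hFG, bd_unique hΘ' hϑb.bf] with θ h1 h2
      rw [h1, h2]
    have horth : ∀ j : ℕ, ∫ θ, (starRingEnd ℂ) (F θ) * (bpt θ ^ j * Θ θ) ∂arcM = 0 := by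
      intro j
      have h1 : fc G (-j) = 0 := by
        rcases Nat.eq_zero_or_pos j with h | h
        · subst h
          have := hgb.zero
          rw [hg0] at this
          simpa using this.symm
        · exact hgb.neg _ (by omega)
      rw [← h1]
      unfold fc
      apply integral_congr_ae
      filter_upwards [hFG', hunit] with θ h2 h3
      rw [h2, map_mul, Complex.conj_conj, neg_neg, zpow_natCast]
      linear_combination (G θ * bpt θ ^ j) * h3
    obtain ⟨v, hv, hvp⟩ := proj_S hsub hzero hadd hsmul hfb.memLp
    have hv0 : v =ᵐ[arcM] 0 := by
      refine huniq v hv fun j => ?_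
      have h1 := hvp _ (hΘ.pow hsub hinv j)
      rw [horth j] at h1
      have h2 := congrArg (starRingEnd ℂ) h1
      rw [← conj_int, map_zero] at h2
      rw [← h2]
      congr 1; ext θ
      simp only [map_mul, Complex.conj_conj]; ring
    refine step f F hf hF fun s hs => ?_
    rw [← hvp s hs]
    apply integral_eq_zero_of_ae
    filter_upwards [hv0] with θ h
    simp [h]
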